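/- arXiv:1907.10563 — 2 statements merged into one kernel-verified Lean document; each statement's English description precedes it below -/
import Mathlib

section
/- Let 0 < p < ∞ and let ω be a radial weight such that ω̃ is a weight. Then there exists a constant C ≥ 1 such that C^{-1}‖f‖_{A^p_{ω̃}} ≤ ‖f‖_{A^p_ω} ≤ C‖f‖_{A^p_{ω̃}} for all analytic f on 𝔻, if and only if ω ∈ D = D̂ ∩ Ď. -/
/-!
Sufficiency. By Jensen's formula `log |f|`, and hence `|f| ^ p`, is subharmonic. Averaging a
subharmonic function over rotations gives a radial one, and the maximum principle on discs makes the
circle means `M(r)` of `|f| ^ p` increasing in `r`. In polar coordinates the norm is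
`∫ M(r) 2 r ω(r) dr`, and the superlevel sets of `M` are intervals `(a, 1)`, so by the layer cake
formula the norms are comparable as soon as the tails `∫_a^1 s ω(s) ds` and `∫_a^1 s ω̃(s) ds` are.
The condition `D̂` bounds the first tail by the second, and `Ď`, summed geometrically through the
change of variables `s ↦ 1 - (1 - s) / K`, bounds the second by the first.

Necessity. On monomials the comparison becomes one between the moments of `ω` and `ω̃`. Integration
by parts bounds the increments of the moments of `ω̃` by the moments of `ω` divided by the exponent,
which forces the moments to be doubling. Up to constants, the moment of order `1 / (1 - r)` bounds
the tail at `r` and, the moments being doubling, is bounded by the tail at `(1 + r) / 2`; this gives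
`D̂`. The same estimates bound the tail of `ω̃` at `r` by that of `ω`. As the former is also at
least `log K` times the tail of `ω` at `1 - (1 - r) / K`, taking `K` large gives `Ď`.
-/

open MeasureTheory Set

/-- Tail integral `ω̂(r) = ∫_r^1 ω(s) ds`. -/
noncomputable def tailInt (ω : ℝ → ℝ) (r : ℝ) : ℝ := ∫ s in r..1, ω s

/-- A radial weight: nonnegative, integrable on `[0,1)`, with positive tails. -/
def RadialWeight (ω : ℝ → ℝ) : Prop :=
  (∀ r ∈ Set.Ico (0:ℝ) 1, 0 ≤ ω r) ∧ MeasureTheory.IntegrableOn ω (Set.Ico 0 1) ∧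
    ∀ r ∈ Set.Ico (0:ℝ) 1, 0 < tailInt ω r

/-- The class `D̂` of upper doubling weights. -/
def Dhat (ω : ℝ → ℝ) : Prop :=
  ∃ C : ℝ, 1 ≤ C ∧ ∀ r ∈ Set.Ico (0:ℝ) 1, tailInt ω r ≤ C * tailInt ω ((1 + r) / 2)

/-- The class `Ď`. -/
def Dcheck (ω : ℝ → ℝ) : Prop :=
  ∃ K C : ℝ, 1 < K ∧ 1 < C ∧ ∀ r ∈ Set.Ico (0:ℝ) 1,
    C * tailInt ω (1 - (1 - r) / K) ≤ tailInt ω r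

/-- The associated weight `ω̃(r) = ω̂(r)/(1-r)`. -/
noncomputable def assocW (ω : ℝ → ℝ) (r : ℝ) : ℝ := tailInt ω r / (1 - r)

/-- `‖f‖_{A^p_ω}^p = ∫_𝔻 |f|^p ω dA`, with `dA` the normalized area measure. -/
noncomputable def ApNorm (p : ℝ) (ω : ℝ → ℝ) (f : ℂ → ℂ) : ℝ :=
  Real.pi⁻¹ * ∫ z in Metric.ball (0:ℂ) 1, ‖f z‖ ^ p * ω ‖z‖

/-- `‖Re f‖_{L^p_ω}^p = ∫_𝔻 |Re f|^p ω dA`. -/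
noncomputable def LpReNorm (p : ℝ) (ω : ℝ → ℝ) (f : ℂ → ℂ) : ℝ :=
  Real.pi⁻¹ * ∫ z in Metric.ball (0:ℂ) 1, |(f z).re| ^ p * ω ‖z‖

/-- `M_p^p(s, Re f)`, the `p`-th power of the `p`-mean of `Re f` on the circle of radius `s`. -/
noncomputable def Mpp (p : ℝ) (f : ℂ → ℂ) (s : ℝ) : ℝ :=
  (2 * Real.pi)⁻¹ * ∫ θ in (0:ℝ)..(2 * Real.pi),
    |(f ((s : ℂ) * Complex.exp ((θ : ℂ) * Complex.I))).re| ^ p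

/-- `sup_{0<s<r} M_p^p(s, Re f)`. -/
noncomputable def supMpp (p : ℝ) (f : ℂ → ℂ) (r : ℝ) : ℝ :=
  sSup ((fun s => Mpp p f s) '' Set.Ioo (0:ℝ) r)

open Real Metric Filter

section CircleAverage

lemma continuous_uncurry_comp_circleMap {X : Type*} [TopologicalSpace X] {F : ℂ → ℂ → X}
    {c d : ℂ} {r s : ℝ} (hF : ContinuousOn (Function.uncurry F) (sphere c |r| ×ˢ sphere d |s|)) :
    Continuous (Function.uncurry fun θ φ : ℝ => F (circleMap c r θ) (circleMap d s φ)) :=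
  hF.comp_continuous (f := fun q : ℝ × ℝ => (circleMap c r q.1, circleMap d s q.2))
    (by fun_prop) fun q => ⟨circleMap_mem_sphere' c r q.1, circleMap_mem_sphere' d s q.2⟩

variable {E : Type*} [NormedAddCommGroup E] [NormedSpace ℝ E]

lemma circleAverage_comp_mul_left (u : ℂ → E) (w c : ℂ) (r : ℝ) (hw : ‖w‖ = 1) :
    circleAverage (fun ζ => u (w * ζ)) c r = circleAverage u (w * c) r := by
  rw [circleAverage_eq_integral_add (f := u) w.arg, circleAverage_def]
  congr! 5 with θ
  have hw' : Complex.exp (w.arg * Complex.I) = w := by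
    simpa [hw] using Complex.norm_mul_exp_arg_mul_I w
  rw [circleMap, circleMap, Complex.ofReal_add, add_mul, Complex.exp_add, hw']
  ring

lemma circleAverage_norm_eq_circleAverage_comp_mul (u : ℂ → E) (z : ℂ) :
    circleAverage u 0 ‖z‖ = circleAverage (fun w => u (w * z)) 0 1 := by
  rw [circleAverage_eq_integral_add z.arg, circleAverage_def]
  congr! 5 with θ
  rw [circleMap_zero, circleMap_zero]
  push_cast
  rw [add_mul, Complex.exp_add, one_mul, mul_left_comm, Complex.norm_mul_exp_arg_mul_I]

variable {F : ℂ → ℂ → E} {c d : ℂ} {r s : ℝ}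

lemma circleIntegrable_circleAverage
    (hF : ContinuousOn (Function.uncurry F) (sphere c |r| ×ˢ sphere d |s|)) :
    CircleIntegrable (fun z => circleAverage (F z) d s) c r :=
  ((intervalIntegral.continuous_parametric_intervalIntegral_of_continuous'
    (continuous_uncurry_comp_circleMap hF) 0 (2 * π)).const_smul _).intervalIntegrable _ _

lemma circleAverage_circleAverage_swap
    (hF : ContinuousOn (Function.uncurry F) (sphere c |r| ×ˢ sphere d |s|)) :
    circleAverage (fun z => circleAverage (F z) d s) c r =
      circleAverage (fun w => circleAverage (fun z => F z w) c r) d s := by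
  simp only [circleAverage_def, intervalIntegral.integral_smul]
  rw [MeasureTheory.intervalIntegral_intervalIntegral_swap]
  exact ((continuous_uncurry_comp_circleMap hF).continuousOn.integrableOn_compact
    (isCompact_uIcc.prod isCompact_uIcc)).mono_set
      (Set.prod_mono uIoc_subset_uIcc uIoc_subset_uIcc)

lemma circleAverage_mono_codiscreteWithin {u v : ℂ → ℝ} {c : ℂ} {R : ℝ} (hR : R ≠ 0)
    (hu : CircleIntegrable u c R) (hv : CircleIntegrable v c R)
    (huv : u ≤ᶠ[codiscreteWithin (sphere c |R|)] v) :
    circleAverage u c R ≤ circleAverage v c R := by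
  have hmin : (fun z => min (u z) (v z)) =ᶠ[codiscreteWithin (sphere c |R|)] u :=
    huv.mono fun z hz => min_eq_left hz
  rw [← circleAverage_congr_codiscreteWithin hmin hR]
  exact circleAverage_mono (hu.congr_codiscreteWithin hmin.symm) hv fun z _ => min_le_right _ _

lemma eqOn_sphere_of_le_circleAverage {u : ℂ → ℝ} {c : ℂ} {R M : ℝ}
    (hu : ContinuousOn u (sphere c |R|)) (hle : ∀ z ∈ sphere c |R|, u z ≤ M)
    (hM : M ≤ circleAverage u c R) : ∀ z ∈ sphere c |R|, u z = M := by
  by_contra! h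
  obtain ⟨z, hz, hzM⟩ := h
  have h2π : 0 < 2 * π := two_pi_pos
  obtain ⟨θ, hθ, rfl⟩ : z ∈ circleMap c R '' Ioc 0 (2 * π) := by rwa [image_circleMap_Ioc]
  have hlt : ∫ θ in 0..2 * π, u (circleMap c R θ) < ∫ _ in 0..2 * π, M :=
    intervalIntegral.integral_lt_integral_of_continuousOn_of_le_of_exists_lt h2π
      (hu.comp_continuous (continuous_circleMap c R) (circleMap_mem_sphere' c R)).continuousOn
      continuousOn_const (fun φ _ => hle _ (circleMap_mem_sphere' c R φ))
      ⟨θ, Ioc_subset_Icc_self hθ, (hle _ hz).lt_of_ne hzM⟩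
  rw [intervalIntegral.integral_const, sub_zero, smul_eq_mul, ← inv_mul_lt_iff₀ h2π] at hlt
  exact hlt.not_ge hM

end CircleAverage

lemma exists_mem_sphere_norm_sub_eq_add (z c : ℂ) {r : ℝ} (hr : 0 ≤ r) :
    ∃ ζ ∈ sphere z r, ‖ζ - c‖ = ‖z - c‖ + r := by
  refine ⟨circleMap z r (z - c).arg, circleMap_mem_sphere z hr _, ?_⟩
  have : circleMap z r (z - c).arg - c =
      ((‖z - c‖ + r : ℝ) : ℂ) * Complex.exp ((z - c).arg * Complex.I) := by
    rw [circleMap, Complex.ofReal_add, add_mul, Complex.norm_mul_exp_arg_mul_I]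
    ring
  rw [this, norm_mul, Complex.norm_exp_ofReal_mul_I, mul_one,
    Complex.norm_of_nonneg (by positivity)]

lemma closedBall_mul_subset_ball_zero {w z : ℂ} {r R : ℝ} (hw : ‖w‖ = 1)
    (hz : closedBall z r ⊆ ball 0 R) : closedBall (w * z) r ⊆ ball 0 R := by
  intro ζ hζ
  have hw0 : w ≠ 0 := norm_ne_zero_iff.1 (by simp [hw])
  have hζ' : w⁻¹ * ζ ∈ closedBall z r := by
    rw [mem_closedBall_iff_norm] at hζ ⊢
    rwa [show w⁻¹ * ζ - z = w⁻¹ * (ζ - w * z) by field_simp, norm_mul, norm_inv, hw, inv_one,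
      one_mul]
  simpa [hw] using hz hζ'

/-- Continuous subharmonic functions on `U`, such as `|f| ^ p` for `f` analytic; continuity replaces
upper semicontinuity, and the sub-mean value property is required on every closed disc in `U`. -/
def ContinuousSubharmonicOn (u : ℂ → ℝ) (U : Set ℂ) : Prop :=
  ContinuousOn u U ∧ ∀ z r, 0 < r → closedBall z r ⊆ U → u z ≤ circleAverage u z r

namespace ContinuousSubharmonicOn

variable {u : ℂ → ℝ} {U : Set ℂ}

/-- The disc of radius `R - |z - c|` about a maximum point `z` farthest from `c` touches the
boundary, and `u` is constant on its circle. -/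
lemma le_of_forall_sphere_le (hu : ContinuousSubharmonicOn u U) {c : ℂ} {R M : ℝ} (hR : 0 ≤ R)
    (hU : closedBall c R ⊆ U) (hM : ∀ z ∈ sphere c R, u z ≤ M) : ∀ z ∈ closedBall c R, u z ≤ M := by
  have hcont : ContinuousOn u (closedBall c R) := hu.1.mono hU
  obtain ⟨z₀, hz₀, hmax⟩ :=
    (isCompact_closedBall c R).exists_isMaxOn (nonempty_closedBall.2 hR) hcont
  have hcompact : IsCompact {z ∈ closedBall c R | u z = u z₀} :=
    (isCompact_closedBall c R).of_isClosed_subset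
      (hcont.preimage_isClosed_of_isClosed isClosed_closedBall isClosed_singleton) (sep_subset _ _)
  obtain ⟨z₁, ⟨hz₁, hz₁max⟩, hfar⟩ := hcompact.exists_isMaxOn ⟨z₀, hz₀, rfl⟩
    (continuous_norm.comp (continuous_id.sub (continuous_const (y := c)))).continuousOn
  suffices hz₁R : ‖z₁ - c‖ = R from fun z hz =>
    (hmax hz).trans (hz₁max ▸ hM z₁ (mem_sphere_iff_norm.2 hz₁R))
  by_contra hne
  set r := R - ‖z₁ - c‖ with hr
  have hr0 : 0 < r := sub_pos.2 ((mem_closedBall_iff_norm.1 hz₁).lt_of_ne hne)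
  have hball : closedBall z₁ r ⊆ closedBall c R :=
    closedBall_subset_closedBall' (by rw [hr, dist_eq_norm]; linarith)
  have hsphere : sphere z₁ |r| ⊆ closedBall c R := by
    rw [abs_of_pos hr0]; exact sphere_subset_closedBall.trans hball
  have hconst : ∀ z ∈ sphere z₁ |r|, u z = u z₀ :=
    eqOn_sphere_of_le_circleAverage (hcont.mono hsphere) (fun z hz => hmax (hsphere hz))
      (hz₁max ▸ hu.2 z₁ r hr0 (hball.trans hU))
  obtain ⟨ζ, hζ, hζ_norm⟩ := exists_mem_sphere_norm_sub_eq_add z₁ c hr0.le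
  rw [← abs_of_pos hr0] at hζ
  have : ‖ζ - c‖ ≤ ‖z₁ - c‖ := hfar ⟨hsphere hζ, hconst ζ hζ⟩
  linarith

lemma circleAverage_norm {R : ℝ} (hu : ContinuousSubharmonicOn u (ball 0 R)) :
    ContinuousSubharmonicOn (fun z => circleAverage u 0 ‖z‖) (ball 0 R) := by
  refine ⟨?_, fun z r hr hzr => ?_⟩
  · have hmean : ContinuousOn (circleAverage u 0) (Ico 0 R) :=
      ContinuousOn.circleAverage (hu.1.mono fun z hz => by simpa using hz.2) fun r hr => hr.1
    exact hmean.comp continuous_norm.continuousOn fun z hz =>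
      ⟨norm_nonneg z, mem_ball_zero_iff.1 hz⟩
  have hsphere {w : ℂ} (hw : w ∈ sphere (0 : ℂ) |1|) : ‖w‖ = 1 := by simpa using hw
  have hcont : ContinuousOn (Function.uncurry fun w ζ => u (w * ζ))
      (sphere 0 |1| ×ˢ sphere z |r|) := by
    refine hu.1.comp continuous_mul.continuousOn fun q hq => ?_
    have hq2 := hzr (sphere_subset_closedBall (abs_of_pos hr ▸ hq.2))
    simpa [hsphere hq.1] using hq2
  have hcont_z : ContinuousOn (fun w => u (w * z)) (sphere 0 |1|) :=
    hu.1.comp (continuous_mul_const z).continuousOn fun w hw =>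
      closedBall_mul_subset_ball_zero (hsphere hw) hzr (mem_closedBall_self hr.le)
  calc circleAverage u 0 ‖z‖ = circleAverage (fun w => u (w * z)) 0 1 :=
        circleAverage_norm_eq_circleAverage_comp_mul u z
    _ ≤ circleAverage (fun w => circleAverage (fun ζ => u (w * ζ)) z r) 0 1 := by
        refine circleAverage_mono hcont_z.circleIntegrable' (circleIntegrable_circleAverage hcont)
          fun w hw => ?_
        rw [circleAverage_comp_mul_left u w z r (hsphere hw)]
        exact hu.2 _ r hr (closedBall_mul_subset_ball_zero (hsphere hw) hzr)
    _ = circleAverage (fun ζ => circleAverage (fun w => u (w * ζ)) 0 1) z r :=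
        circleAverage_circleAverage_swap hcont
    _ = circleAverage (fun ζ => circleAverage u 0 ‖ζ‖) z r := by
        simp only [circleAverage_norm_eq_circleAverage_comp_mul]

lemma monotoneOn_circleAverage {R : ℝ} (hu : ContinuousSubharmonicOn u (ball 0 R)) :
    MonotoneOn (circleAverage u 0) (Ico 0 R) := by
  intro r hr s hs hrs
  have hle := hu.circleAverage_norm.le_of_forall_sphere_le hs.1 (closedBall_subset_ball hs.2)
    (M := circleAverage u 0 s) (fun z hz => by rw [mem_sphere_zero_iff_norm.1 hz]) r
    (by simpa [abs_of_nonneg hr.1] using hrs)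
  simpa [abs_of_nonneg hr.1] using hle

end ContinuousSubharmonicOn

lemma log_norm_le_circleAverage {f : ℂ → ℂ} {c : ℂ} {R : ℝ} (hR : 0 < R)
    (hf : AnalyticOnNhd ℂ f (closedBall c R)) (hc : f c ≠ 0) :
    log ‖f c‖ ≤ circleAverage (fun z => log ‖f z‖) c R := by
  rw [← abs_of_pos hR] at hf
  rw [hf.circleAverage_log_norm hR.ne' hc]
  -- In Jensen's formula the zeros of `f` contribute a nonnegative sum.
  refine le_add_of_nonneg_left (finsum_nonneg fun z => ?_)
  by_cases hz : z ∈ closedBall c |R|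
  · refine mul_nonneg (mod_cast MeromorphicOn.AnalyticOnNhd.divisor_nonneg hf _) ?_
    rw [mem_closedBall', dist_eq_norm, abs_of_pos hR] at hz
    rcases (norm_nonneg (c - z)).eq_or_lt with h0 | h0
    · simp [← h0]
    · exact log_nonneg (by rwa [← div_eq_mul_inv, one_le_div h0])
  · simp [hz]

lemma rpow_add_mul_log_sub_log_le_rpow {a b : ℝ} (ha : 0 < a) (hb : 0 < b) (p : ℝ) :
    a ^ p + a ^ p * p * (log b - log a) ≤ b ^ p := by
  have h := add_one_le_exp (log b * p - log a * p)
  rw [exp_sub, ← rpow_def_of_pos hb, ← rpow_def_of_pos ha, le_div_iff₀ (rpow_pos_of_pos ha p)] at h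
  linarith

/-- The tangent line to `exp` at `p log |f c|` transfers the sub-mean value property from `log |f|`
to `|f|^p`. -/
lemma norm_rpow_le_circleAverage {f : ℂ → ℂ} {c : ℂ} {R p : ℝ} (hR : 0 < R) (hp : 0 < p)
    (hf : AnalyticOnNhd ℂ f (closedBall c R)) :
    ‖f c‖ ^ p ≤ circleAverage (fun z => ‖f z‖ ^ p) c R := by
  rcases eq_or_ne (f c) 0 with hc | hc
  · rw [hc, norm_zero, zero_rpow hp.ne']
    exact circleAverage_nonneg_of_nonneg fun z _ => by positivity
  have hsphere : sphere c |R| ⊆ closedBall c R := by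
    rw [abs_of_pos hR]; exact sphere_subset_closedBall
  have hint : CircleIntegrable (fun z => ‖f z‖ ^ p) c R :=
    ((hf.continuousOn.mono hsphere).norm.rpow_const fun _ _ => Or.inr hp.le).circleIntegrable'
  have hlog : CircleIntegrable (fun z => log ‖f z‖) c R :=
    (hf.mono hsphere).meromorphicOn.circleIntegrable_log_norm
  have hne : ∀ᶠ z in codiscreteWithin (sphere c |R|), f z ≠ 0 :=
    codiscreteWithin_mono hsphere (hf.preimage_zero_mem_codiscreteWithin hc
      (mem_closedBall_self hR.le) (isConnected_closedBall hR.le))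
  set a := ‖f c‖
  have ha0 : 0 < a := norm_pos_iff.2 hc
  have hlog_sub : CircleIntegrable (fun z => log ‖f z‖ - log a) c R :=
    hlog.sub (circleIntegrable_const _ _ _)
  have hscaled : CircleIntegrable (fun z => a ^ p * p * (log ‖f z‖ - log a)) c R :=
    hlog_sub.const_smul (a := a ^ p * p)
  have hnonneg : 0 ≤ circleAverage (fun z => log ‖f z‖) c R - log a :=
    sub_nonneg.2 (log_norm_le_circleAverage hR hf hc)
  calc a ^ p ≤ a ^ p + a ^ p * p * (circleAverage (fun z => log ‖f z‖) c R - log a) :=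
        le_add_of_nonneg_right (by positivity)
    _ = circleAverage (fun z => a ^ p + a ^ p * p * (log ‖f z‖ - log a)) c R := by
        rw [circleAverage_fun_add (circleIntegrable_const _ _ _) hscaled, circleAverage_const]
        simp_rw [← smul_eq_mul (a ^ p * p)]
        rw [circleAverage_fun_smul, circleAverage_fun_sub hlog (circleIntegrable_const _ _ _),
          circleAverage_const]
    _ ≤ circleAverage (fun z => ‖f z‖ ^ p) c R :=
        circleAverage_mono_codiscreteWithin hR.ne'
          ((circleIntegrable_const _ _ _).add hscaled) hint
          (hne.mono fun z hz => rpow_add_mul_log_sub_log_le_rpow ha0 (norm_pos_iff.2 hz) p)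

lemma continuousSubharmonicOn_norm_rpow {f : ℂ → ℂ} {U : Set ℂ} (hU : IsOpen U)
    (hf : DifferentiableOn ℂ f U) {p : ℝ} (hp : 0 < p) :
    ContinuousSubharmonicOn (fun z => ‖f z‖ ^ p) U :=
  ⟨hf.continuousOn.norm.rpow_const fun _ _ => Or.inr hp.le, fun _ _ hr hzr =>
    norm_rpow_le_circleAverage hr hp ((hf.analyticOnNhd hU).mono hzr)⟩

/-- The moment `∫_0^1 r^y w(r) dr` of a radial weight; for `y = n p + 1` it is half of
`ApNorm p w (z ^ n)`. -/
noncomputable def radialMoment (w : ℝ → ℝ) (y : ℝ) : ℝ := ∫ r in 0..1, r ^ y * w r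

lemma one_sub_rpow_le {p r : ℝ} (hr0 : 0 ≤ r) (hr1 : r ≤ 1) :
    1 - r ^ p ≤ max 1 p * (1 - r) := by
  rcases le_total p 1 with hp | hp
  · rw [max_eq_left hp, one_mul]
    exact sub_le_sub_left (self_le_rpow_of_le_one hr0 hr1 hp) 1
  · rw [max_eq_right hp]
    have h := one_add_mul_self_le_rpow_one_add (s := r - 1) (by linarith) hp
    rw [add_sub_cancel] at h
    linarith

lemma exp_neg_two_mul_le_one_sub {x : ℝ} (hx : x ≤ 1 / 2) (hx0 : 0 ≤ x) :
    exp (-(2 * x)) ≤ 1 - x := by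
  have h : (1 - x)⁻¹ ≤ 1 + 2 * x := inv_le_of_inv_le₀ (by linarith) (by
    rw [inv_le_iff_one_le_mul₀ (by linarith)]; nlinarith)
  rw [exp_neg]
  refine inv_le_of_inv_le₀ (by linarith) (h.trans ?_)
  linarith [add_one_le_exp (2 * x)]

lemma one_le_exp_mul_rpow {r s y : ℝ} (hr : 1 / 2 ≤ r) (hrs : r ≤ s) (hs : s ≤ 1) (hy : 0 ≤ y) :
    1 ≤ exp (2 * (1 - r) * y) * s ^ y :=
  calc 1 = exp (2 * (1 - r) * y) * exp (-(2 * (1 - r))) ^ y := by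
        rw [← exp_mul, ← exp_add, neg_mul, add_neg_cancel, exp_zero]
    _ ≤ exp (2 * (1 - r) * y) * s ^ y := by
        gcongr
        linarith [exp_neg_two_mul_le_one_sub (x := 1 - r) (by linarith) (by linarith)]

lemma mul_radialMoment_tailInt {w : ℝ → ℝ} (hw : IntervalIntegrable w volume 0 1) {y : ℝ}
    (hy : 0 ≤ y) : (y + 1) * radialMoment (tailInt w) y = radialMoment w (y + 1) := by
  have htail : tailInt w = fun r => -∫ s in 1..r, w s :=
    funext fun r => intervalIntegral.integral_symm 1 r
  have hpow_ac : AbsolutelyContinuousOnInterval (fun r : ℝ => r ^ (y + 1)) 0 1 :=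
    (contDiff_rpow_const_of_le (n := 1)
      (by simpa using hy)).contDiffOn.absolutelyContinuousOnInterval
  have htail_ac : AbsolutelyContinuousOnInterval (tailInt w) 0 1 := by
    rw [htail]
    exact (hw.absolutelyContinuousOnInterval_intervalIntegral right_mem_uIcc).neg
  have hparts := htail_ac.integral_mul_deriv_eq_deriv_mul hpow_ac
  have hlhs : ∫ r in 0..1, tailInt w r * deriv (fun r : ℝ => r ^ (y + 1)) r =
      (y + 1) * radialMoment (tailInt w) y := by
    rw [radialMoment, ← intervalIntegral.integral_const_mul]
    refine intervalIntegral.integral_congr fun r _ => ?_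
    rw [Real.deriv_rpow_const, add_sub_cancel_right]
    ring
  have hrhs : ∫ r in 0..1, deriv (tailInt w) r * r ^ (y + 1) = -radialMoment w (y + 1) := by
    rw [radialMoment, ← intervalIntegral.integral_neg]
    refine intervalIntegral.integral_congr_ae ?_
    filter_upwards [hw.ae_hasDerivAt_integral] with r hr hr01
    rw [htail, (hr (uIoc_subset_uIcc hr01) 1 right_mem_uIcc).fun_neg.deriv]
    ring
  rw [hlhs, hrhs] at hparts
  rw [hparts, tailInt, intervalIntegral.integral_same, zero_rpow (by linarith)]
  ring

namespace RadialWeight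

variable {w : ℝ → ℝ} {a b r x y ρ : ℝ}

lemma nonneg (hw : RadialWeight w) (hr : r ∈ Ico 0 1) : 0 ≤ w r := hw.1 r hr

lemma tailInt_pos (hw : RadialWeight w) (hr : r ∈ Ico 0 1) : 0 < tailInt w r := hw.2.2 r hr

lemma integrableOn_Icc (hw : RadialWeight w) : IntegrableOn w (Icc 0 1) := by
  rw [integrableOn_Icc_iff_integrableOn_Ico]
  exact hw.2.1

lemma intervalIntegrable (hw : RadialWeight w) (ha : a ∈ Icc 0 1) (hb : b ∈ Icc 0 1) :
    IntervalIntegrable w volume a b := by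
  rw [intervalIntegrable_iff]
  exact hw.integrableOn_Icc.mono_set (uIoc_subset_uIcc.trans (uIcc_subset_Icc ha hb))

lemma intervalIntegrable_rpow_mul (hw : RadialWeight w) (hy : 0 ≤ y) (ha : a ∈ Icc 0 1)
    (hb : b ∈ Icc 0 1) : IntervalIntegrable (fun r => r ^ y * w r) volume a b :=
  (hw.intervalIntegrable ha hb).continuousOn_mul (continuous_rpow_const hy).continuousOn

lemma integral_rpow_mul_mono_interval (hw : RadialWeight w) (hy : 0 ≤ y) {c d : ℝ} (hc : 0 ≤ c)
    (hca : c ≤ a) (hab : a ≤ b) (hbd : b ≤ d) (hd : d ≤ 1) :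
    ∫ s in a..b, s ^ y * w s ≤ ∫ s in c..d, s ^ y * w s := by
  have hcd : c ≤ d := hca.trans (hab.trans hbd)
  refine intervalIntegral.integral_mono_interval hca hab hbd ?_
    (hw.intervalIntegrable_rpow_mul hy ⟨hc, hcd.trans hd⟩ ⟨hc.trans hcd, hd⟩)
  rw [← restrict_Ioo_eq_restrict_Ioc]
  exact ae_restrict_of_forall_mem measurableSet_Ioo fun s hs =>
    mul_nonneg (rpow_nonneg (hc.trans hs.1.le) y)
      (hw.nonneg ⟨hc.trans hs.1.le, hs.2.trans_le hd⟩)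

lemma integral_le_tailInt (hw : RadialWeight w) (ha : 0 ≤ a) (hab : a ≤ b) (hb : b ≤ 1) :
    ∫ s in a..b, w s ≤ tailInt w a := by
  simpa [tailInt] using
    hw.integral_rpow_mul_mono_interval le_rfl ha le_rfl hab hb le_rfl

lemma antitoneOn_tailInt (hw : RadialWeight w) : AntitoneOn (tailInt w) (Icc 0 1) := by
  intro a ha b hb hab
  simpa [tailInt] using
    hw.integral_rpow_mul_mono_interval le_rfl ha.1 hab hb.2 le_rfl le_rfl

lemma tailInt_nonneg (hw : RadialWeight w) (hr : r ∈ Icc 0 1) : 0 ≤ tailInt w r := by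
  simpa [tailInt] using hw.antitoneOn_tailInt hr (right_mem_Icc.2 zero_le_one) hr.2

lemma continuousOn_tailInt (hw : RadialWeight w) : ContinuousOn (tailInt w) (Icc 0 1) := by
  rw [← uIcc_of_le zero_le_one]
  refine intervalIntegral.continuousOn_primitive_interval_left ?_
  simpa using hw.integrableOn_Icc

lemma assoc (hw : RadialWeight w) (hw' : IntegrableOn (assocW w) (Ico 0 1)) :
    RadialWeight (assocW w) := by
  refine ⟨fun r hr => div_nonneg (hw.tailInt_pos hr).le (sub_nonneg.2 hr.2.le), hw',
    fun r hr => ?_⟩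
  refine intervalIntegral.intervalIntegral_pos_of_pos_on ?_ (fun s hs => ?_) hr.2
  · rw [intervalIntegrable_iff_integrableOn_Ico_of_le hr.2.le]
    exact hw'.mono_set (Ico_subset_Ico_left hr.1)
  · exact div_pos (hw.tailInt_pos ⟨hr.1.trans hs.1.le, hs.2⟩) (sub_pos.2 hs.2)

lemma log_mul_tailInt_le_tailInt_assocW (hw : RadialWeight w)
    (hw' : IntegrableOn (assocW w) (Ico 0 1)) {K : ℝ} (hK : 1 ≤ K) (hr : r ∈ Ico 0 1) :
    log K * tailInt w (1 - (1 - r) / K) ≤ tailInt (assocW w) r := by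
  set ρ := 1 - (1 - r) / K with hρ
  have : 0 < K := by linarith
  have h1r : 0 < 1 - r := sub_pos.2 hr.2
  have hrρ : r ≤ ρ := by linarith [div_le_self h1r.le hK]
  have hρ1 : ρ < 1 := sub_lt_self 1 (by positivity)
  have hlog : ∫ s in r..ρ, (1 - s)⁻¹ = log K := by
    rw [intervalIntegral.integral_comp_sub_left (fun x => x⁻¹) 1,
      integral_inv_of_pos (by linarith) h1r, hρ, sub_sub_cancel, div_div_cancel₀ h1r.ne']
  have hinv : IntervalIntegrable (fun s => (1 - s)⁻¹ * tailInt w ρ) volume r ρ := by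
    refine (ContinuousOn.intervalIntegrable ?_).mul_const _
    refine ContinuousOn.inv₀ (by fun_prop) fun s hs => ?_
    rw [uIcc_of_le hrρ] at hs
    linarith [hs.2]
  calc log K * tailInt w ρ = ∫ s in r..ρ, (1 - s)⁻¹ * tailInt w ρ := by
        rw [intervalIntegral.integral_mul_const, hlog]
    _ ≤ ∫ s in r..ρ, assocW w s := by
        refine intervalIntegral.integral_mono_on_of_le_Ioo hrρ hinv
          ((hw.assoc hw').intervalIntegrable ⟨hr.1, hr.2.le⟩ ⟨hr.1.trans hrρ, hρ1.le⟩)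
          fun s hs => ?_
        rw [assocW, div_eq_inv_mul]
        have hs1 : 0 < 1 - s := by linarith [hs.2]
        gcongr
        exact hw.antitoneOn_tailInt ⟨hr.1.trans hs.1.le, by linarith⟩ ⟨hr.1.trans hrρ, hρ1.le⟩
          hs.2.le
    _ ≤ tailInt (assocW w) r := (hw.assoc hw').integral_le_tailInt hr.1 hrρ hρ1.le

lemma integral_rpow_mul_le_radialMoment (hw : RadialWeight w) (hy : 0 ≤ y) (ha : 0 ≤ a)
    (hab : a ≤ b) (hb : b ≤ 1) : ∫ s in a..b, s ^ y * w s ≤ radialMoment w y :=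
  hw.integral_rpow_mul_mono_interval hy le_rfl ha hab hb le_rfl

lemma radialMoment_anti (hw : RadialWeight w) (hx : 0 ≤ x) (hxy : x ≤ y) :
    radialMoment w y ≤ radialMoment w x := by
  have h0 : (0 : ℝ) ∈ Icc 0 1 := by simp
  have h1 : (1 : ℝ) ∈ Icc 0 1 := by simp
  refine intervalIntegral.integral_mono_on_of_le_Ioo zero_le_one
    (hw.intervalIntegrable_rpow_mul (hx.trans hxy) h0 h1)
    (hw.intervalIntegrable_rpow_mul hx h0 h1) fun s hs => ?_
  exact mul_le_mul_of_nonneg_right (rpow_le_rpow_of_exponent_ge hs.1 hs.2.le hxy)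
    (hw.nonneg ⟨hs.1.le, hs.2⟩)

lemma radialMoment_nonneg (hw : RadialWeight w) (hy : 0 ≤ y) : 0 ≤ radialMoment w y := by
  simpa using hw.integral_rpow_mul_le_radialMoment hy le_rfl le_rfl zero_le_one

lemma tailInt_le_exp_mul_radialMoment (hw : RadialWeight w) (hr : r ∈ Icc (1 / 2) 1)
    (hy : 0 ≤ y) : tailInt w r ≤ exp (2 * (1 - r) * y) * radialMoment w y := by
  have hr0 : 0 ≤ r := one_half_pos.le.trans hr.1
  have hr01 : r ∈ Icc 0 1 := ⟨hr0, hr.2⟩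
  have h1 : (1 : ℝ) ∈ Icc 0 1 := by simp
  calc tailInt w r ≤ ∫ s in r..1, exp (2 * (1 - r) * y) * (s ^ y * w s) := by
        refine intervalIntegral.integral_mono_on_of_le_Ioo hr.2 (hw.intervalIntegrable hr01 h1)
          ((hw.intervalIntegrable_rpow_mul hy hr01 h1).const_mul _) fun s hs => ?_
        rw [← mul_assoc]
        exact le_mul_of_one_le_left (hw.nonneg ⟨hr0.trans hs.1.le, hs.2⟩)
          (one_le_exp_mul_rpow hr.1 hs.1.le hs.2.le hy)
    _ ≤ exp (2 * (1 - r) * y) * radialMoment w y := by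
        rw [intervalIntegral.integral_const_mul]
        gcongr
        exact hw.integral_rpow_mul_le_radialMoment hy hr0 hr.2 le_rfl

lemma radialMoment_add_le (hw : RadialWeight w) (hx : 0 ≤ x) (hy : 0 ≤ y) (hρ : ρ ∈ Icc 0 1) :
    radialMoment w (x + y) ≤ ρ ^ x * radialMoment w y + tailInt w ρ := by
  have h0 : (0 : ℝ) ∈ Icc 0 1 := by simp
  have h1 : (1 : ℝ) ∈ Icc 0 1 := by simp
  have hint {a b : ℝ} (ha : a ∈ Icc 0 1) (hb : b ∈ Icc 0 1) :=
    hw.intervalIntegrable_rpow_mul (add_nonneg hx hy) ha hb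
  rw [radialMoment, ← intervalIntegral.integral_add_adjacent_intervals (hint h0 hρ) (hint hρ h1)]
  gcongr ?_ + ?_
  · calc ∫ s in 0..ρ, s ^ (x + y) * w s ≤ ∫ s in 0..ρ, ρ ^ x * (s ^ y * w s) := by
          refine intervalIntegral.integral_mono_on_of_le_Ioo hρ.1 (hint h0 hρ)
            ((hw.intervalIntegrable_rpow_mul hy h0 hρ).const_mul _) fun s hs => ?_
          have := hw.nonneg ⟨hs.1.le, hs.2.trans_le hρ.2⟩
          rw [rpow_add hs.1, mul_assoc]
          exact mul_le_mul_of_nonneg_right (rpow_le_rpow hs.1.le hs.2.le hx)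
            (mul_nonneg (rpow_nonneg hs.1.le y) this)
      _ ≤ ρ ^ x * radialMoment w y := by
          rw [intervalIntegral.integral_const_mul]
          exact mul_le_mul_of_nonneg_left
            (hw.integral_rpow_mul_le_radialMoment hy le_rfl hρ.1 hρ.2) (rpow_nonneg hρ.1 x)
  · refine intervalIntegral.integral_mono_on_of_le_Ioo hρ.2 (hint hρ h1)
      (hw.intervalIntegrable hρ h1) fun s hs => ?_
    have hs0 := hρ.1.trans hs.1.le
    exact mul_le_of_le_one_left (hw.nonneg ⟨hs0, hs.2⟩)
      (rpow_le_one hs0 hs.2.le (add_nonneg hx hy))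

lemma radialMoment_assocW_sub_le (hw : RadialWeight w)
    (hw' : IntegrableOn (assocW w) (Ico 0 1)) {p : ℝ} (hp : 0 ≤ p) (hy : 0 ≤ y) :
    radialMoment (assocW w) y - radialMoment (assocW w) (y + p) ≤
      max 1 p * radialMoment (tailInt w) y := by
  have h0 : (0 : ℝ) ∈ Icc 0 1 := by simp
  have h1 : (1 : ℝ) ∈ Icc 0 1 := by simp
  have hint {y : ℝ} (hy : 0 ≤ y) := (hw.assoc hw').intervalIntegrable_rpow_mul hy h0 h1
  have htail : IntervalIntegrable (fun s => s ^ y * tailInt w s) volume 0 1 :=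
    ((continuous_rpow_const hy).continuousOn.mul
      (by simpa using hw.continuousOn_tailInt)).intervalIntegrable
  rw [radialMoment, radialMoment, radialMoment, ← intervalIntegral.integral_sub (hint hy)
    (hint (add_nonneg hy hp)), ← intervalIntegral.integral_const_mul]
  refine intervalIntegral.integral_mono_on_of_le_Ioo zero_le_one
    ((hint hy).sub (hint (add_nonneg hy hp))) (htail.const_mul _) fun s hs => ?_
  have hs1 : 0 < 1 - s := sub_pos.2 hs.2
  have hws : 0 ≤ assocW w s := (hw.assoc hw').nonneg ⟨hs.1.le, hs.2⟩
  calc s ^ y * assocW w s - s ^ (y + p) * assocW w s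
      = (s ^ y * assocW w s) * (1 - s ^ p) := by rw [rpow_add hs.1]; ring
    _ ≤ (s ^ y * assocW w s) * (max 1 p * (1 - s)) := by
        have := rpow_nonneg hs.1.le y
        gcongr
        exact one_sub_rpow_le hs.1.le hs.2.le
    _ = max 1 p * (s ^ y * tailInt w s) := by rw [assocW]; field_simp

lemma mul_radialMoment_assocW_sub_le (hw : RadialWeight w)
    (hw' : IntegrableOn (assocW w) (Ico 0 1)) {p : ℝ} (hp : 0 ≤ p) (hy : 0 ≤ y) :
    (y + 1) * (radialMoment (assocW w) y - radialMoment (assocW w) (y + p)) ≤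
      max 1 p * radialMoment w y := by
  calc (y + 1) * (radialMoment (assocW w) y - radialMoment (assocW w) (y + p))
      ≤ (y + 1) * (max 1 p * radialMoment (tailInt w) y) := by
        gcongr
        exact hw.radialMoment_assocW_sub_le hw' hp hy
    _ = max 1 p * radialMoment w (y + 1) := by
        rw [← mul_radialMoment_tailInt (hw.intervalIntegrable (by simp) (by simp)) hy]
        ring
    _ ≤ max 1 p * radialMoment w y := by
        gcongr
        exact hw.radialMoment_anti hy (le_add_of_nonneg_right zero_le_one)

end RadialWeight

section Necessity

lemma pow_mul_le_of_mul_sub_le {T : ℕ → ℝ} {c : ℝ} (hT : ∀ n, 0 ≤ T n) (hc : 0 ≤ c)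
    (hstep : ∀ n : ℕ, n * (T n - T (n + 1)) ≤ c * T n) {n : ℕ} (hn : 0 < n) (hcn : c ≤ n) (j : ℕ) :
    (1 - c / n) ^ j * T n ≤ T (n + j) := by
  have hn' : (0 : ℝ) < n := mod_cast hn
  have hfactor : 0 ≤ 1 - c / n := sub_nonneg.2 ((div_le_one hn').2 hcn)
  induction j with
  | zero => simp
  | succ j ih =>
    have hnj : (0 : ℝ) < (n + j : ℕ) := mod_cast hn.trans_le (Nat.le_add_right n j)
    calc (1 - c / n) ^ (j + 1) * T n = (1 - c / n) * ((1 - c / n) ^ j * T n) := by ring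
      _ ≤ (1 - c / n) * T (n + j) := by gcongr
      _ ≤ (1 - c / (n + j : ℕ)) * T (n + j) := by
        have := hT (n + j)
        gcongr
        exact Nat.le_add_right n j
      _ ≤ T (n + (j + 1)) := by
        have h := hstep (n + j)
        rw [mul_comm, ← le_div_iff₀ hnj, mul_div_right_comm] at h
        rw [← add_assoc]
        linarith

lemma le_exp_mul_two_mul_of_mul_sub_le {T : ℕ → ℝ} {c : ℝ} (hT : ∀ n, 0 ≤ T n) (hc : 0 ≤ c)
    (hstep : ∀ n : ℕ, n * (T n - T (n + 1)) ≤ c * T n) {n : ℕ} (hn : 0 < n) (hcn : 2 * c ≤ n) :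
    T n ≤ exp (2 * c) * T (2 * n) := by
  have hn' : (0 : ℝ) < n := mod_cast hn
  have hexp : exp (-(2 * c)) ≤ (1 - c / n) ^ n := by
    calc exp (-(2 * c)) = exp (-(2 * (c / n))) ^ n := by
          rw [← exp_nat_mul]; congr 1; field_simp
      _ ≤ (1 - c / n) ^ n := by
          gcongr
          refine exp_neg_two_mul_le_one_sub ?_ (by positivity)
          rw [div_le_iff₀ hn']
          linarith
  have h : exp (-(2 * c)) * T n ≤ T (2 * n) := by
    rw [two_mul n]
    exact (mul_le_mul_of_nonneg_right hexp (hT n)).trans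
      (pow_mul_le_of_mul_sub_le hT hc hstep hn (by linarith) n)
  rwa [exp_neg, inv_mul_le_iff₀ (exp_pos _)] at h

lemma le_pow_mul_two_pow_mul {M : ℕ → ℝ} {D : ℝ} {n₀ : ℕ} (hD : 0 ≤ D)
    (hM : ∀ n ≥ n₀, M n ≤ D * M (2 * n)) {n : ℕ} (hn : n₀ ≤ n) (k : ℕ) :
    M n ≤ D ^ k * M (2 ^ k * n) := by
  induction k with
  | zero => simp
  | succ k ih =>
    calc M n ≤ D ^ k * M (2 ^ k * n) := ih
      _ ≤ D ^ k * (D * M (2 * (2 ^ k * n))) := by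
        gcongr
        exact hM _ (hn.trans (Nat.le_mul_of_pos_left n (by positivity)))
      _ = D ^ (k + 1) * M (2 ^ (k + 1) * n) := by rw [pow_succ, pow_succ']; ring_nf

variable {v w : ℝ → ℝ} {p : ℝ}

lemma natCast_mul_radialMoment_assocW_sub_le (hw : RadialWeight w)
    (hw' : IntegrableOn (assocW w) (Ico 0 1)) (hp : 0 < p) (n : ℕ) :
    n * (radialMoment (assocW w) (n * p + 1) - radialMoment (assocW w) ((n + 1 : ℕ) * p + 1)) ≤
      max 1 p / p * radialMoment w (n * p + 1) := by
  have hsucc : ((n + 1 : ℕ) : ℝ) * p + 1 = n * p + 1 + p := by push_cast; ring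
  rw [hsucc, div_mul_eq_mul_div, le_div_iff₀ hp]
  have hdiff : 0 ≤ radialMoment (assocW w) (n * p + 1) - radialMoment (assocW w) (n * p + 1 + p) :=
    sub_nonneg.2 ((hw.assoc hw').radialMoment_anti (by positivity) (by linarith))
  nlinarith [hw.mul_radialMoment_assocW_sub_le hw' hp.le (y := n * p + 1) (by positivity)]

lemma exists_radialMoment_doubling (hw : RadialWeight w)
    (hw' : IntegrableOn (assocW w) (Ico 0 1)) (hp : 0 < p) {C : ℝ} (hC : 0 ≤ C)
    (hle : ∀ n : ℕ, radialMoment w (n * p + 1) ≤ C * radialMoment (assocW w) (n * p + 1))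
    (hge : ∀ n : ℕ, radialMoment (assocW w) (n * p + 1) ≤ C * radialMoment w (n * p + 1)) :
    ∃ (D : ℝ) (n₀ : ℕ), 0 ≤ D ∧ ∀ n ≥ n₀,
      radialMoment w (n * p + 1) ≤ D * radialMoment w ((2 * n : ℕ) * p + 1) := by
  set T : ℕ → ℝ := fun n => radialMoment (assocW w) (n * p + 1)
  set c := max 1 p / p * C with hc
  have hc0 : 0 ≤ c := by positivity
  have hstep (n : ℕ) : n * (T n - T (n + 1)) ≤ c * T n := by
    refine (natCast_mul_radialMoment_assocW_sub_le hw hw' hp n).trans ?_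
    rw [hc, mul_assoc]
    gcongr
    exact hle n
  refine ⟨C * (exp (2 * c) * C), max 1 ⌈2 * c⌉₊, by positivity, fun n hn => ?_⟩
  calc radialMoment w (n * p + 1) ≤ C * T n := hle n
    _ ≤ C * (exp (2 * c) * T (2 * n)) := by
        gcongr
        exact le_exp_mul_two_mul_of_mul_sub_le
          (fun n => (hw.assoc hw').radialMoment_nonneg (by positivity)) hc0 hstep
          ((le_max_left _ _).trans hn) (Nat.ceil_le.1 ((le_max_right _ _).trans hn))
    _ ≤ C * (exp (2 * c) * (C * radialMoment w ((2 * n : ℕ) * p + 1))) := by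
        gcongr
        exact hge (2 * n)
    _ = _ := by ring

/-- Doubling the exponent gains the factor `ρ ^ (N p)` on `[0, ρ]`, so for `N` large compared with
`1 / (1 - ρ)` that part is absorbed into the left-hand side. -/
lemma exists_radialMoment_le_mul_tailInt (hw : RadialWeight w) (hp : 0 < p) {D : ℝ} {n₀ : ℕ}
    (hD : 0 ≤ D) (hdoubling : ∀ n ≥ n₀,
      radialMoment w (n * p + 1) ≤ D * radialMoment w ((2 * n : ℕ) * p + 1)) :
    ∃ E, 0 ≤ E ∧ ∀ ρ ∈ Ico (0 : ℝ) 1, ∀ n ≥ n₀, 1 ≤ (1 - ρ) * n →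
      radialMoment w (n * p + 1) ≤ E * tailInt w ρ := by
  obtain ⟨k, hk⟩ : ∃ k : ℕ, D * exp (-(p * 2 ^ k)) ≤ 1 / 2 := by
    have hlim : Tendsto (fun k : ℕ => D * exp (-(p * 2 ^ k))) atTop (nhds (D * 0)) :=
      (tendsto_exp_neg_atTop_nhds_zero.comp
        ((tendsto_pow_atTop_atTop_of_one_lt one_lt_two).const_mul_atTop hp)).const_mul D
    rw [mul_zero] at hlim
    exact (hlim.eventually_le_const one_half_pos).exists
  refine ⟨D ^ k * (2 * D), by positivity, fun ρ hρ n hn hρn => ?_⟩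
  set N := 2 ^ k * n with hN
  have hρN : D * ρ ^ (N * p) ≤ 1 / 2 := by
    refine le_trans (mul_le_mul_of_nonneg_left ?_ hD) hk
    calc ρ ^ (N * p) ≤ exp (-(1 - ρ)) ^ (N * p) := by
          gcongr
          exacts [hρ.1, by linarith [add_one_le_exp (-(1 - ρ))]]
      _ = exp (-(p * 2 ^ k * ((1 - ρ) * n))) := by
          rw [← exp_mul, hN]; push_cast; ring_nf
      _ ≤ exp (-(p * 2 ^ k)) := by
          rw [exp_le_exp, neg_le_neg_iff]
          exact le_mul_of_one_le_right (by positivity) hρn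
  have hN_le : radialMoment w (N * p + 1) ≤ 2 * D * tailInt w ρ := by
    have hM : 0 ≤ radialMoment w (N * p + 1) := hw.radialMoment_nonneg (by positivity)
    have h := calc radialMoment w (N * p + 1) ≤ D * radialMoment w ((2 * N : ℕ) * p + 1) :=
          hdoubling N (hn.trans (Nat.le_mul_of_pos_left n (by positivity)))
      _ = D * radialMoment w (N * p + (N * p + 1)) := by push_cast; ring_nf
      _ ≤ D * (ρ ^ (N * p) * radialMoment w (N * p + 1) + tailInt w ρ) := by
          gcongr
          exact hw.radialMoment_add_le (by positivity) (by positivity) ⟨hρ.1, hρ.2.le⟩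
    nlinarith [mul_le_mul_of_nonneg_right hρN hM]
  calc radialMoment w (n * p + 1) ≤ D ^ k * radialMoment w (N * p + 1) :=
        le_pow_mul_two_pow_mul (M := fun n => radialMoment w (n * p + 1)) hD hdoubling hn k
    _ ≤ D ^ k * (2 * D * tailInt w ρ) := by gcongr
    _ = D ^ k * (2 * D) * tailInt w ρ := by ring

lemma exists_le_mul_of_le_mul_on_Ico_half {f g : ℝ → ℝ} {B : ℝ}
    (hf : ∀ r ∈ Ico (0 : ℝ) 1, f r ≤ f 0) (hg : AntitoneOn g (Ico 0 1))
    (hg_pos : ∀ r ∈ Ico (0 : ℝ) 1, 0 < g r) (hfg : ∀ r ∈ Ico (1 / 2 : ℝ) 1, f r ≤ B * g r) :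
    ∃ E, 1 ≤ E ∧ ∀ r ∈ Ico (0 : ℝ) 1, f r ≤ E * g r := by
  have hhalf : (1 / 2 : ℝ) ∈ Ico 0 1 := by norm_num
  refine ⟨max 1 (max B (|f 0| / g (1 / 2))), le_max_left _ _, fun r hr => ?_⟩
  have hgr := hg_pos r hr
  rcases le_total (1 / 2) r with h | h
  · refine (hfg r ⟨h, hr.2⟩).trans ?_
    gcongr
    exact (le_max_left _ _).trans (le_max_right _ _)
  · have hg_half := hg_pos _ hhalf
    calc f r ≤ |f 0| := (hf r hr).trans (le_abs_self _)
      _ = |f 0| / g (1 / 2) * g (1 / 2) := (div_mul_cancel₀ _ hg_half.ne').symm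
      _ ≤ |f 0| / g (1 / 2) * g r := by gcongr; exact hg hr hhalf h
      _ ≤ _ := by gcongr; exact (le_max_right _ _).trans (le_max_right _ _)

lemma exists_nat_two_le_mul_le {h : ℝ} (hh : 0 < h) (hh1 : h ≤ 1) (n₀ : ℕ) :
    ∃ n ≥ n₀, 2 ≤ h * n ∧ h * n ≤ n₀ + 3 := by
  have hlower := (div_le_iff₀' hh).1 (Nat.le_ceil (2 / h))
  have hupper := (lt_div_iff₀' hh).1 (sub_lt_iff_lt_add.2
    (Nat.ceil_lt_add_one (div_nonneg zero_le_two hh.le)))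
  have hn₀ : h * n₀ ≤ n₀ := mul_le_of_le_one_left n₀.cast_nonneg hh1
  refine ⟨n₀ + ⌈2 / h⌉₊, Nat.le_add_right _ _, ?_, ?_⟩ <;> rw [Nat.cast_add, mul_add]
  · linarith [mul_nonneg hh.le n₀.cast_nonneg]
  · linarith

lemma exists_tailInt_le_mul_tailInt (hv : RadialWeight v) (hw : RadialWeight w) (hp : 0 < p)
    {B D : ℝ} {n₀ : ℕ} (hB : 0 ≤ B) (hD : 0 ≤ D)
    (hvw : ∀ n : ℕ, radialMoment v (n * p + 1) ≤ B * radialMoment w (n * p + 1))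
    (hdoubling : ∀ n ≥ n₀,
      radialMoment w (n * p + 1) ≤ D * radialMoment w ((2 * n : ℕ) * p + 1)) :
    ∃ E, 1 ≤ E ∧ ∀ r ∈ Ico (0 : ℝ) 1, tailInt v r ≤ E * tailInt w ((1 + r) / 2) := by
  obtain ⟨E, _, hmoment⟩ := exists_radialMoment_le_mul_tailInt hw hp hD hdoubling
  have hlarge : ∀ r ∈ Ico (1 / 2 : ℝ) 1, tailInt v r ≤
      exp (2 * ((n₀ + 3) * p + 1)) * (B * E) * tailInt w ((1 + r) / 2) := by
    intro r hr
    have h1r : 0 < 1 - r := sub_pos.2 hr.2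
    obtain ⟨n, hn, hn_lower, hn_upper⟩ :=
      exists_nat_two_le_mul_le h1r (by linarith [hr.1]) n₀
    calc tailInt v r ≤ exp (2 * (1 - r) * (n * p + 1)) * radialMoment v (n * p + 1) :=
          hv.tailInt_le_exp_mul_radialMoment ⟨hr.1, hr.2.le⟩ (by positivity)
      _ ≤ exp (2 * ((n₀ + 3) * p + 1)) * (B * (E * tailInt w ((1 + r) / 2))) := by
          gcongr ?_ * ?_
          · exact hv.radialMoment_nonneg (by positivity)
          · rw [exp_le_exp]
            nlinarith [mul_le_mul_of_nonneg_right hn_upper hp.le, hr.1]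
          · refine (hvw n).trans (mul_le_mul_of_nonneg_left ?_ hB)
            exact hmoment _ ⟨by linarith [hr.1], by linarith⟩ n hn (by linarith)
      _ = _ := by ring
  refine exists_le_mul_of_le_mul_on_Ico_half (fun r hr => ?_) (fun r hr s hs hrs => ?_)
    (fun r hr => ?_) hlarge
  · exact hv.antitoneOn_tailInt (by simp) ⟨hr.1, hr.2.le⟩ hr.1
  · exact hw.antitoneOn_tailInt ⟨by linarith [hr.1], by linarith [hr.2]⟩
      ⟨by linarith [hs.1], by linarith [hs.2]⟩ (by linarith)
  · exact hw.tailInt_pos ⟨by linarith [hr.1], by linarith [hr.2]⟩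

lemma dcheck_of_tailInt_assocW_le (hw : RadialWeight w) (hw' : IntegrableOn (assocW w) (Ico 0 1))
    {B : ℝ} (hB : 0 < B) (h : ∀ r ∈ Ico (0 : ℝ) 1, tailInt (assocW w) r ≤ B * tailInt w r) :
    Dcheck w := by
  have hK : 1 < exp (2 * B) := one_lt_exp_iff.2 (by positivity)
  refine ⟨exp (2 * B), 2, hK, one_lt_two, fun r hr => ?_⟩
  have hlog := (hw.log_mul_tailInt_le_tailInt_assocW hw' hK.le hr).trans (h r hr)
  rw [log_exp, mul_comm 2 B, mul_assoc, mul_comm B 2] at hlog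
  exact le_of_mul_le_mul_left hlog hB

theorem dhat_and_dcheck_of_radialMoment_le (hw : RadialWeight w)
    (hw' : IntegrableOn (assocW w) (Ico 0 1)) (hp : 0 < p) {C : ℝ} (hC : 0 ≤ C)
    (hle : ∀ n : ℕ, radialMoment w (n * p + 1) ≤ C * radialMoment (assocW w) (n * p + 1))
    (hge : ∀ n : ℕ, radialMoment (assocW w) (n * p + 1) ≤ C * radialMoment w (n * p + 1)) :
    Dhat w ∧ Dcheck w := by
  obtain ⟨D, n₀, hD, hdoubling⟩ := exists_radialMoment_doubling hw hw' hp hC hle hge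
  obtain ⟨B, hB, hBtail⟩ :=
    exists_tailInt_le_mul_tailInt (hw.assoc hw') hw hp hC hD hge hdoubling
  refine ⟨exists_tailInt_le_mul_tailInt hw hw hp zero_le_one hD (by simp) hdoubling,
    dcheck_of_tailInt_assocW_le hw hw' (by linarith) fun r hr => (hBtail r hr).trans ?_⟩
  gcongr
  exact hw.antitoneOn_tailInt ⟨hr.1, hr.2.le⟩ ⟨by linarith [hr.1], by linarith [hr.2]⟩
    (by linarith [hr.2])

end Necessity

section Sufficiency

namespace RadialWeight

variable {w : ℝ → ℝ} {a b C K : ℝ}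

lemma intervalIntegrable_id_mul (hw : RadialWeight w) (ha : a ∈ Icc 0 1) (hb : b ∈ Icc 0 1) :
    IntervalIntegrable (fun s => s * w s) volume a b := by
  simpa using hw.intervalIntegrable_rpow_mul zero_le_one ha hb

lemma integral_id_mul_le_tailInt (hw : RadialWeight w) (ha : a ∈ Icc 0 1) :
    ∫ s in a..1, s * w s ≤ tailInt w a :=
  intervalIntegral.integral_mono_on_of_le_Ioo ha.2
    (hw.intervalIntegrable_id_mul ha (by simp)) (hw.intervalIntegrable ha (by simp)) fun s hs =>
    mul_le_of_le_one_left (hw.nonneg ⟨ha.1.trans hs.1.le, hs.2⟩) hs.2.le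

lemma tailInt_le_two_mul_integral_id_mul (hw : RadialWeight w) (ha : a ∈ Icc 0 1) :
    tailInt w ((1 + a) / 2) ≤ 2 * ∫ s in a..1, s * w s := by
  have ham : a ≤ (1 + a) / 2 := by linarith [ha.2]
  have hm : (1 + a) / 2 ∈ Icc (0 : ℝ) 1 := ⟨ha.1.trans ham, by linarith [ha.2]⟩
  calc tailInt w ((1 + a) / 2) ≤ ∫ s in (1 + a) / 2..1, 2 * (s * w s) := by
        refine intervalIntegral.integral_mono_on_of_le_Ioo hm.2 (hw.intervalIntegrable hm (by simp))
          ((hw.intervalIntegrable_id_mul hm (by simp)).const_mul 2) fun s hs => ?_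
        have hs0 := hm.1.trans hs.1.le
        nlinarith [hw.nonneg ⟨hs0, hs.2⟩, hs.1, ha.1]
    _ = 2 * ∫ s in (1 + a) / 2..1, s ^ (1 : ℝ) * w s := by
        simp only [intervalIntegral.integral_const_mul, rpow_one]
    _ ≤ 2 * ∫ s in a..1, s ^ (1 : ℝ) * w s := by
        gcongr
        exact hw.integral_rpow_mul_mono_interval zero_le_one ha.1 ham hm.2 le_rfl le_rfl
    _ = 2 * ∫ s in a..1, s * w s := by simp only [rpow_one]

lemma tailInt_le_two_mul_tailInt_assocW (hw : RadialWeight w)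
    (hw' : IntegrableOn (assocW w) (Ico 0 1)) (ha : a ∈ Ico 0 1) :
    tailInt w ((1 + a) / 2) ≤ 2 * tailInt (assocW w) a := by
  have hm : (1 + a) / 2 ∈ Icc (0 : ℝ) 1 := ⟨by linarith [ha.1], by linarith [ha.2]⟩
  have hlog := hw.log_mul_tailInt_le_tailInt_assocW hw' one_le_two ha
  rw [show 1 - (1 - a) / 2 = (1 + a) / 2 by ring] at hlog
  nlinarith [hw.tailInt_nonneg hm, log_two_gt_d9]

lemma integral_assocW_le_mul_tailInt (hw : RadialWeight w)
    (hw' : IntegrableOn (assocW w) (Ico 0 1)) (hK : 1 ≤ K) (ha : a ∈ Ico 0 1) :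
    ∫ s in a..1 - (1 - a) / K, assocW w s ≤ K * tailInt w a := by
  have : 0 < K := by linarith
  have h1a : 0 < 1 - a := sub_pos.2 ha.2
  set h := (1 - a) / K with hh
  have hh0 : 0 < h := by positivity
  have haρ : a ≤ 1 - h := by linarith [div_le_self h1a.le hK]
  have htail := (hw.tailInt_pos ha).le
  calc ∫ s in a..1 - h, assocW w s ≤ ∫ _ in a..1 - h, tailInt w a / h := by
        refine intervalIntegral.integral_mono_on haρ ((hw.assoc hw').intervalIntegrable
          ⟨ha.1, ha.2.le⟩ ⟨ha.1.trans haρ, by linarith⟩) intervalIntegrable_const fun s hs => ?_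
        rw [assocW]
        gcongr
        · exact hw.antitoneOn_tailInt ⟨ha.1, ha.2.le⟩ ⟨ha.1.trans hs.1, by linarith [hs.2]⟩ hs.1
        · linarith [hs.2]
    _ = (1 - h - a) * (tailInt w a / h) := by
        rw [intervalIntegral.integral_const, smul_eq_mul]
    _ ≤ (1 - a) * (tailInt w a / h) := by gcongr; linarith
    _ = K * tailInt w a := by rw [hh]; field_simp

/-- The scaling `s ↦ 1 - (1 - s) / K` maps `[a, 1]` onto `[1 - (1 - a) / K, 1]` and preserves
`ds / (1 - s)`. -/
lemma mul_tailInt_assocW_le (hw : RadialWeight w) (hw' : IntegrableOn (assocW w) (Ico 0 1))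
    (hK : 1 ≤ K) (hD : ∀ r ∈ Ico (0 : ℝ) 1, C * tailInt w (1 - (1 - r) / K) ≤ tailInt w r)
    (ha : a ∈ Ico 0 1) :
    C * tailInt (assocW w) (1 - (1 - a) / K) ≤ tailInt (assocW w) a := by
  have : 0 < K := by linarith
  have h1a : 0 < 1 - a := sub_pos.2 ha.2
  have hscale (s : ℝ) : 1 - (1 - s) / K = 1 - 1 / K + s / K := by ring
  have hone : 1 - 1 / K + 1 / K = 1 := by ring
  have hint : IntervalIntegrable (fun s => assocW w (1 - (1 - s) / K)) volume a 1 := by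
    have hρ : 1 - (1 - a) / K ∈ Icc 0 1 :=
      ⟨by linarith [div_le_self h1a.le hK, ha.1], sub_le_self _ (by positivity)⟩
    have h := (((hw.assoc hw').intervalIntegrable hρ (b := 1) (by simp)).comp_add_left
      (1 - 1 / K)).comp_mul_left (c := K⁻¹)
    convert h using 1
    · funext s
      rw [hscale, div_eq_inv_mul s]
    · field_simp; ring
    · field_simp; ring
  calc C * tailInt (assocW w) (1 - (1 - a) / K)
      = ∫ s in a..1, C * (K⁻¹ * assocW w (1 - (1 - s) / K)) := by
        simp only [hscale, intervalIntegral.integral_const_mul, tailInt]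
        rw [← smul_eq_mul K⁻¹, intervalIntegral.inv_smul_integral_comp_add_div, hone]
    _ ≤ tailInt (assocW w) a := by
        refine intervalIntegral.integral_mono_on_of_le_Ioo ha.2.le
          ((hint.const_mul _).const_mul _)
          ((hw.assoc hw').intervalIntegrable ⟨ha.1, ha.2.le⟩ (by simp)) fun s hs => ?_
        have hs1 : 0 < 1 - s := sub_pos.2 hs.2
        calc C * (K⁻¹ * assocW w (1 - (1 - s) / K))
            = C * tailInt w (1 - (1 - s) / K) / (1 - s) := by
              rw [assocW, sub_sub_cancel]; field_simp
          _ ≤ assocW w s := by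
              rw [assocW]
              gcongr
              exact hD s ⟨ha.1.trans hs.1.le, hs.2⟩

lemma tailInt_assocW_le_of_dcheck (hw : RadialWeight w)
    (hw' : IntegrableOn (assocW w) (Ico 0 1)) (hK : 1 ≤ K) (hC : 1 < C)
    (hD : ∀ r ∈ Ico (0 : ℝ) 1, C * tailInt w (1 - (1 - r) / K) ≤ tailInt w r)
    (ha : a ∈ Ico 0 1) : tailInt (assocW w) a ≤ K * C / (C - 1) * tailInt w a := by
  have h1a : 0 < 1 - a := sub_pos.2 ha.2
  have hρ : 1 - (1 - a) / K ∈ Icc 0 1 :=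
    ⟨by linarith [div_le_self h1a.le hK, ha.1], sub_le_self _ (by positivity)⟩
  have hv := hw.assoc hw'
  have hsplit : (∫ s in a..1 - (1 - a) / K, assocW w s) + tailInt (assocW w) (1 - (1 - a) / K) =
      tailInt (assocW w) a :=
    intervalIntegral.integral_add_adjacent_intervals
      (hv.intervalIntegrable ⟨ha.1, ha.2.le⟩ hρ) (hv.intervalIntegrable hρ (by simp))
  rw [div_mul_eq_mul_div, le_div_iff₀ (sub_pos.2 hC)]
  nlinarith [hw.integral_assocW_le_mul_tailInt hw' hK ha, hw.mul_tailInt_assocW_le hw' hK hD ha]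

end RadialWeight

theorem exists_integral_id_mul_le_mul_of_dhat_of_dcheck {w : ℝ → ℝ} (hw : RadialWeight w)
    (hw' : IntegrableOn (assocW w) (Ico 0 1)) (hhat : Dhat w) (hcheck : Dcheck w) :
    ∃ c, 1 ≤ c ∧ ∀ a ∈ Ico (0 : ℝ) 1,
      ∫ s in a..1, s * w s ≤ c * ∫ s in a..1, s * assocW w s ∧
      ∫ s in a..1, s * assocW w s ≤ c * ∫ s in a..1, s * w s := by
  obtain ⟨C, hC, hhat⟩ := hhat
  obtain ⟨K, C', hK, hC', hcheck⟩ := hcheck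
  have hv := hw.assoc hw'
  set B := K * C' / (C' - 1)
  have : 0 < B := div_pos (by positivity) (sub_pos.2 hC')
  refine ⟨max (4 * C ^ 2) (2 * B * C), le_max_of_le_left (by nlinarith), fun a ha => ?_⟩
  have ha' : a ∈ Icc (0 : ℝ) 1 := ⟨ha.1, ha.2.le⟩
  have hm : (1 + a) / 2 ∈ Ico (0 : ℝ) 1 := ⟨by linarith [ha.1], by linarith [ha.2]⟩
  have hpos {u : ℝ → ℝ} (hu : RadialWeight u) : 0 ≤ ∫ s in a..1, s * u s := by
    linarith [hu.tailInt_le_two_mul_integral_id_mul ha', hu.tailInt_pos hm]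
  constructor
  · calc ∫ s in a..1, s * w s ≤ tailInt w a := hw.integral_id_mul_le_tailInt ha'
      _ ≤ C * (C * tailInt w ((1 + (1 + a) / 2) / 2)) :=
        (hhat a ha).trans (by gcongr; exact hhat _ hm)
      _ ≤ C * (C * (2 * (2 * ∫ s in a..1, s * assocW w s))) := by
        gcongr
        exact (hw.tailInt_le_two_mul_tailInt_assocW hw' hm).trans
          (by gcongr; exact hv.tailInt_le_two_mul_integral_id_mul ha')
      _ = 4 * C ^ 2 * ∫ s in a..1, s * assocW w s := by ring
      _ ≤ _ := mul_le_mul_of_nonneg_right (le_max_left _ _) (hpos hv)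
  · calc ∫ s in a..1, s * assocW w s ≤ tailInt (assocW w) a := hv.integral_id_mul_le_tailInt ha'
      _ ≤ B * (C * tailInt w ((1 + a) / 2)) :=
        (hw.tailInt_assocW_le_of_dcheck hw' hK.le hC' hcheck ha).trans (by gcongr; exact hhat a ha)
      _ ≤ B * (C * (2 * ∫ s in a..1, s * w s)) := by
        gcongr
        exact hw.tailInt_le_two_mul_integral_id_mul ha'
      _ = 2 * B * C * ∫ s in a..1, s * w s := by ring
      _ ≤ _ := mul_le_mul_of_nonneg_right (le_max_right _ _) (hpos hw)

end Sufficiency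

section PolarCoordinates

open scoped ENNReal

lemma lintegral_mul_comp_norm {g : ℂ → ℝ≥0∞} (hg : Measurable g) {F : ℝ → ℝ≥0∞}
    (hF : Measurable F) :
    ∫⁻ z, g z * F ‖z‖ =
      ∫⁻ r in Ioi 0, ENNReal.ofReal r * F r * ∫⁻ θ in Ioo (-π) π, g (circleMap 0 r θ) := by
  have hsymm (r θ : ℝ) : Complex.polarCoord.symm (r, θ) = circleMap 0 r θ := by
    rw [Complex.polarCoord_symm_apply, circleMap_zero, Complex.exp_mul_I, Complex.ofReal_cos,
      Complex.ofReal_sin]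
  have hmeas : Measurable fun q : ℝ × ℝ => Complex.polarCoord.symm q := by
    simp_rw [Complex.polarCoord_symm_apply]
    fun_prop
  have hintegrand : Measurable fun q : ℝ × ℝ => ENNReal.ofReal q.1 •
      (g (Complex.polarCoord.symm q) * F ‖Complex.polarCoord.symm q‖) :=
    measurable_fst.ennreal_ofReal.smul ((hg.comp hmeas).mul (hF.comp (measurable_norm.comp hmeas)))
  rw [← Complex.lintegral_comp_polarCoord_symm, polarCoord_target, Measure.volume_eq_prod,
    ← Measure.prod_restrict, lintegral_prod _ hintegrand.aemeasurable]
  refine setLIntegral_congr_fun measurableSet_Ioi fun r hr => ?_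
  have hcirc : Measurable fun θ => g (circleMap 0 r θ) :=
    hg.comp (continuous_circleMap 0 r).measurable
  rw [← lintegral_const_mul _ hcirc]
  refine lintegral_congr fun θ => ?_
  rw [hsymm, norm_circleMap_zero, abs_of_pos hr, smul_eq_mul]
  ring

lemma quasiMeasurePreserving_norm : Measure.QuasiMeasurePreserving (norm : ℂ → ℝ) := by
  refine ⟨measurable_norm, .mk fun s hs hs0 => ?_⟩
  have hF : Measurable (s.indicator (1 : ℝ → ℝ≥0∞)) := measurable_one.indicator hs
  have hae : s.indicator (1 : ℝ → ℝ≥0∞) =ᵐ[volume.restrict (Ioi 0)] 0 :=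
    ae_restrict_of_ae (indicator_meas_zero hs0)
  calc Measure.map norm volume s = ∫⁻ z : ℂ, 1 * s.indicator 1 ‖z‖ := by
        rw [Measure.map_apply measurable_norm hs, ← lintegral_indicator_one (measurable_norm hs)]
        simp only [one_mul]
        rfl
    _ = ∫⁻ r in Ioi 0, ENNReal.ofReal r * s.indicator 1 r * ∫⁻ _ in Ioo (-π) π, 1 :=
        lintegral_mul_comp_norm measurable_one hF
    _ = 0 := by
        rw [lintegral_congr_ae (g := 0) (hae.mono fun r hr => by simp [hr]), lintegral_zero_fun]

lemma lintegral_mul_comp_norm₀ {g : ℂ → ℝ≥0∞} (hg : Measurable g) {F : ℝ → ℝ≥0∞}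
    (hF : AEMeasurable F) :
    ∫⁻ z, g z * F ‖z‖ =
      ∫⁻ r in Ioi 0, ENNReal.ofReal r * F r * ∫⁻ θ in Ioo (-π) π, g (circleMap 0 r θ) := by
  have hmk := lintegral_mul_comp_norm hg hF.measurable_mk
  have hnorm := quasiMeasurePreserving_norm.ae_eq_comp hF.ae_eq_mk
  refine (lintegral_congr_ae (hnorm.mono fun z hz => congrArg (g z * ·) hz)).trans
    (hmk.trans (lintegral_congr_ae ((ae_restrict_of_ae hF.ae_eq_mk).mono fun r hr => ?_)))
  simp only [hr]

lemma lintegral_ball_mul_comp_norm {g : ℂ → ℝ≥0∞} {F : ℝ → ℝ≥0∞} {R : ℝ}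
    (hg : ContinuousOn g (ball 0 R)) (hF : AEMeasurable F (volume.restrict (Ico 0 R))) :
    ∫⁻ z in ball 0 R, g z * F ‖z‖ =
      ∫⁻ r in Ioo 0 R, ENNReal.ofReal r * F r * ∫⁻ θ in Ioo (-π) π, g (circleMap 0 r θ) := by
  classical
  have hg_meas : Measurable ((ball 0 R).indicator g) := by
    rw [← piecewise_eq_indicator]
    exact hg.measurable_piecewise continuousOn_const measurableSet_ball
  have hF_meas : AEMeasurable ((Ico 0 R).indicator F) :=
    (aemeasurable_indicator_iff measurableSet_Ico).2 hF
  have hball (z : ℂ) : (ball 0 R).indicator (fun z => g z * F ‖z‖) z =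
      (ball 0 R).indicator g z * (Ico 0 R).indicator F ‖z‖ := by
    by_cases hz : z ∈ ball 0 R
    · simp only [indicator_of_mem hz,
        indicator_of_mem (show ‖z‖ ∈ Ico 0 R from ⟨norm_nonneg z, mem_ball_zero_iff.1 hz⟩)]
    · simp only [indicator_of_notMem hz, zero_mul]
  have hcircle : ∀ r ∈ Ioi (0 : ℝ), ENNReal.ofReal r * (Ico 0 R).indicator F r *
      ∫⁻ θ in Ioo (-π) π, (ball 0 R).indicator g (circleMap 0 r θ) =
      (Ioo 0 R).indicator (fun r => ENNReal.ofReal r * F r *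
        ∫⁻ θ in Ioo (-π) π, g (circleMap 0 r θ)) r := by
    intro r (hr : 0 < r)
    by_cases hrR : r < R
    · have hmem (θ : ℝ) : circleMap 0 r θ ∈ ball (0 : ℂ) R :=
        sphere_subset_ball hrR (circleMap_mem_sphere 0 hr.le θ)
      simp only [indicator_of_mem (hmem _), indicator_of_mem (show r ∈ Ico 0 R from ⟨hr.le, hrR⟩),
        indicator_of_mem (show r ∈ Ioo 0 R from ⟨hr, hrR⟩)]
    · rw [indicator_of_notMem (fun h => hrR h.2), indicator_of_notMem (fun h => hrR h.2), mul_zero,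
        zero_mul]
  rw [← lintegral_indicator measurableSet_ball, lintegral_congr hball,
    lintegral_mul_comp_norm₀ hg_meas hF_meas, setLIntegral_congr_fun measurableSet_Ioi hcircle,
    setLIntegral_indicator measurableSet_Ioo, inter_eq_left.2 Ioo_subset_Ioi_self]

lemma lintegral_circleMap_eq_circleAverage {u : ℂ → ℝ} {c : ℂ} {r : ℝ}
    (hu : ContinuousOn u (sphere c |r|)) (hu0 : ∀ z ∈ sphere c |r|, 0 ≤ u z) :
    ∫⁻ θ in Ioo (-π) π, ENNReal.ofReal (u (circleMap c r θ)) =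
      ENNReal.ofReal (2 * π * circleAverage u c r) := by
  have hmem (θ : ℝ) : circleMap c r θ ∈ sphere c |r| := circleMap_mem_sphere' c r θ
  have hcont : Continuous fun θ => u (circleMap c r θ) :=
    hu.comp_continuous (continuous_circleMap c r) hmem
  rw [← ofReal_integral_eq_lintegral_ofReal (hcont.integrableOn_Icc.mono_set Ioo_subset_Icc_self)
    (ae_of_all _ fun θ => hu0 _ (hmem θ)), circleAverage_eq_integral_add (-π),
    intervalIntegral.integral_comp_add_right (fun θ => u (circleMap c r θ)), smul_eq_mul,
    mul_inv_cancel_left₀ (by positivity), ← integral_Ioc_eq_integral_Ioo,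
    ← intervalIntegral.integral_of_le (by linarith [pi_pos])]
  congr 2 <;> ring

/-- The measure `2 r w(r) dr`: integrating the circle means `circleAverage u 0` against it over
`(0, R)` amounts to integrating `u(z) w(|z|)` over `ball 0 R` in normalized area measure. -/
noncomputable def radialMeasure (w : ℝ → ℝ) : Measure ℝ :=
  volume.withDensity fun r => ENNReal.ofReal (2 * r * w r)

lemma setLIntegral_radialMeasure {w : ℝ → ℝ} {s : Set ℝ} (hs : MeasurableSet s)
    (hw : AEMeasurable w (volume.restrict s)) (g : ℝ → ℝ≥0∞) :
    ∫⁻ r in s, g r ∂radialMeasure w = ∫⁻ r in s, ENNReal.ofReal (2 * r * w r) * g r :=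
  setLIntegral_withDensity_eq_setLIntegral_mul_non_measurable₀ _
    ((measurable_id.const_mul 2).aemeasurable.mul hw).ennreal_ofReal _ hs (by simp)

lemma lintegral_ball_eq_lintegral_circleAverage {u : ℂ → ℝ} {w : ℝ → ℝ} {R : ℝ}
    (hu : ContinuousOn u (ball 0 R)) (hu0 : ∀ z ∈ ball 0 R, 0 ≤ u z)
    (hw : AEMeasurable w (volume.restrict (Ico 0 R))) :
    ∫⁻ z in ball 0 R, ENNReal.ofReal (u z * w ‖z‖) =
      ENNReal.ofReal π *
        ∫⁻ r in Ioo 0 R, ENNReal.ofReal (circleAverage u 0 r) ∂radialMeasure w := by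
  have hcircle : ∀ r ∈ Ioo (0 : ℝ) R, ENNReal.ofReal r * ENNReal.ofReal (w r) *
      ∫⁻ θ in Ioo (-π) π, ENNReal.ofReal (u (circleMap 0 r θ)) =
      ENNReal.ofReal π * (ENNReal.ofReal (2 * r * w r) * ENNReal.ofReal (circleAverage u 0 r)) := by
    intro r hr
    have hsphere : sphere (0 : ℂ) |r| ⊆ ball 0 R := by
      rw [abs_of_pos hr.1]
      exact sphere_subset_ball hr.2
    rw [lintegral_circleMap_eq_circleAverage (hu.mono hsphere) fun z hz => hu0 z (hsphere hz),
      ENNReal.ofReal_mul (by positivity), ENNReal.ofReal_mul zero_le_two,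
      ENNReal.ofReal_mul (by linarith [hr.1]), ENNReal.ofReal_mul zero_le_two]
    ring
  have hu_cont : ContinuousOn (fun z => ENNReal.ofReal (u z)) (ball 0 R) :=
    ENNReal.continuous_ofReal.comp_continuousOn hu
  rw [setLIntegral_radialMeasure measurableSet_Ioo (hw.mono_set Ioo_subset_Ico_self),
    ← lintegral_const_mul' _ _ ENNReal.ofReal_ne_top,
    ← setLIntegral_congr_fun measurableSet_Ioo hcircle,
    ← lintegral_ball_mul_comp_norm hu_cont hw.ennreal_ofReal]
  exact setLIntegral_congr_fun measurableSet_ball fun z hz => ENNReal.ofReal_mul (hu0 z hz)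

end PolarCoordinates

section LayerCake

open scoped ENNReal

lemma exists_Ioo_subset_subset_Ico {α : Type*} [ConditionallyCompleteLinearOrder α] {S : Set α}
    {a b : α} (hS : S ⊆ Ioo a b) (hne : S.Nonempty)
    (hup : ∀ x ∈ S, ∀ y ∈ Ioo a b, x ≤ y → y ∈ S) :
    ∃ c ∈ Ico a b, Ioo c b ⊆ S ∧ S ⊆ Ico c b := by
  have hbdd : BddBelow S := ⟨a, fun x hx => (hS hx).1.le⟩
  have ha : a ≤ sInf S := le_csInf hne fun x hx => (hS hx).1.le
  obtain ⟨x, hx⟩ := hne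
  refine ⟨sInf S, ⟨ha, (csInf_le hbdd hx).trans_lt (hS hx).2⟩, fun y hy => ?_,
    fun y hy => ⟨csInf_le hbdd hy, (hS hy).2⟩⟩
  obtain ⟨z, hz, hzy⟩ := exists_lt_of_csInf_lt ⟨x, hx⟩ hy.1
  exact hup z hz y ⟨ha.trans_lt hy.1, hy.2⟩ hzy.le

lemma setLIntegral_le_mul_of_monotoneOn {μ ν : Measure ℝ} [NullSingletonClass μ] {A : ℝ → ℝ}
    {a b : ℝ} (hA : MonotoneOn A (Ioo a b)) (hA0 : ∀ r ∈ Ioo a b, 0 ≤ A r) {c : ℝ≥0∞}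
    (hc : c ≠ ⊤) (h : ∀ x ∈ Ico a b, μ (Ioo x b) ≤ c * ν (Ioo x b)) :
    ∫⁻ r in Ioo a b, ENNReal.ofReal (A r) ∂μ ≤ c * ∫⁻ r in Ioo a b, ENNReal.ofReal (A r) ∂ν := by
  have hlayer (κ : Measure ℝ) : ∫⁻ r in Ioo a b, ENNReal.ofReal (A r) ∂κ =
      ∫⁻ t in Ioi 0, κ ({r | t < A r} ∩ Ioo a b) := by
    rw [lintegral_eq_lintegral_meas_lt _ (ae_restrict_of_forall_mem measurableSet_Ioo hA0)
      (aemeasurable_restrict_of_monotoneOn measurableSet_Ioo hA)]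
    simp_rw [Measure.restrict_apply' (μ := κ) (measurableSet_Ioo (a := a) (b := b))]
  rw [hlayer, hlayer, ← lintegral_const_mul' _ _ hc]
  refine lintegral_mono fun t => ?_
  rcases ({r | t < A r} ∩ Ioo a b).eq_empty_or_nonempty with hempty | hne
  · simp only [hempty, measure_empty, zero_le]
  · obtain ⟨x, hx, hle, hge⟩ := exists_Ioo_subset_subset_Ico inter_subset_right hne
      fun r hr s hs hrs => ⟨lt_of_lt_of_le hr.1 (hA hr.2 hs hrs), hs⟩
    calc μ ({r | t < A r} ∩ Ioo a b) ≤ μ (Ico x b) := measure_mono hge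
      _ = μ (Ioo x b) := measure_congr Ioo_ae_eq_Ico.symm
      _ ≤ c * ν (Ioo x b) := h x hx
      _ ≤ c * ν ({r | t < A r} ∩ Ioo a b) := by gcongr

end LayerCake

section BergmanNorm

open scoped ENNReal

variable {p : ℝ} {w : ℝ → ℝ} {f : ℂ → ℂ}

lemma RadialWeight.radialMeasure_Ioo (hw : RadialWeight w) {a : ℝ} (ha : a ∈ Ico 0 1) :
    radialMeasure w (Ioo a 1) = ENNReal.ofReal (2 * ∫ s in a..1, s * w s) := by
  have hint : IntegrableOn (fun s => 2 * s * w s) (Ioo a 1) := by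
    simp_rw [mul_assoc]
    exact (((intervalIntegrable_iff_integrableOn_Ioo_of_le ha.2.le).1
      (hw.intervalIntegrable_id_mul ⟨ha.1, ha.2.le⟩ (right_mem_Icc.2 zero_le_one)))).const_mul 2
  have hnonneg : ∀ s ∈ Ioo a 1, 0 ≤ 2 * s * w s := fun s hs =>
    have hs0 : 0 ≤ s := ha.1.trans hs.1.le
    mul_nonneg (by positivity) (hw.nonneg ⟨hs0, hs.2⟩)
  rw [radialMeasure, withDensity_apply _ measurableSet_Ioo,
    ← ofReal_integral_eq_lintegral_ofReal hint
      (ae_restrict_of_forall_mem measurableSet_Ioo hnonneg),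
    ← intervalIntegral.integral_const_mul, intervalIntegral.integral_of_le ha.2.le,
    integral_Ioc_eq_integral_Ioo]
  simp_rw [mul_assoc]

lemma RadialWeight.apNorm_eq (hw : RadialWeight w) (hp : 0 < p)
    (hf : DifferentiableOn ℂ f (ball 0 1)) :
    ApNorm p w f = (∫⁻ r in Ioo 0 1,
      ENNReal.ofReal (circleAverage (fun z => ‖f z‖ ^ p) 0 r) ∂radialMeasure w).toReal := by
  have hcont : ContinuousOn (fun z => ‖f z‖ ^ p) (ball 0 1) :=
    hf.continuousOn.norm.rpow_const fun _ _ => Or.inr hp.le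
  have hball : ball (0 : ℂ) 1 = norm ⁻¹' Ico (0 : ℝ) 1 := by
    ext z
    simp
  have hw_meas : AEStronglyMeasurable (fun z : ℂ => w ‖z‖) (volume.restrict (ball 0 1)) := by
    rw [hball]
    exact hw.2.1.aestronglyMeasurable.comp_quasiMeasurePreserving
      (quasiMeasurePreserving_norm.restrict (mapsTo_preimage _ _))
  have hnonneg : ∀ z ∈ ball (0 : ℂ) 1, 0 ≤ ‖f z‖ ^ p * w ‖z‖ := fun z hz =>
    mul_nonneg (by positivity) (hw.nonneg ⟨norm_nonneg z, mem_ball_zero_iff.1 hz⟩)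
  rw [ApNorm, integral_eq_lintegral_of_nonneg_ae
      (ae_restrict_of_forall_mem measurableSet_ball hnonneg)
      ((hcont.aestronglyMeasurable measurableSet_ball).mul hw_meas),
    lintegral_ball_eq_lintegral_circleAverage hcont (fun z _ => by positivity) hw.2.1.aemeasurable,
    ENNReal.toReal_mul, ENNReal.toReal_ofReal pi_pos.le, inv_mul_cancel_left₀ pi_ne_zero]

lemma RadialWeight.apNorm_pow (hw : RadialWeight w) (hp : 0 < p) (n : ℕ) :
    ApNorm p w (fun z => z ^ n) = 2 * radialMoment w (n * p + 1) := by
  have hmean : ∀ r ∈ Ioo (0 : ℝ) 1,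
      circleAverage (fun z : ℂ => ‖z ^ n‖ ^ p) 0 r = r ^ (n * p) := fun r hr => by
    refine circleAverage_const_on_circle fun z hz => ?_
    rw [norm_pow, mem_sphere_zero_iff_norm.1 hz, abs_of_pos hr.1, ← rpow_natCast,
      ← rpow_mul hr.1.le]
  have hint : IntegrableOn (fun r => 2 * (r ^ (n * p + 1) * w r)) (Ioo 0 1) :=
    ((intervalIntegrable_iff_integrableOn_Ioo_of_le zero_le_one).1
      (hw.intervalIntegrable_rpow_mul (by positivity) (left_mem_Icc.2 zero_le_one)
        (right_mem_Icc.2 zero_le_one))).const_mul 2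
  have hnonneg : ∀ r ∈ Ioo (0 : ℝ) 1, 0 ≤ 2 * (r ^ (n * p + 1) * w r) := fun r hr =>
    mul_nonneg zero_le_two (mul_nonneg (rpow_nonneg hr.1.le _) (hw.nonneg ⟨hr.1.le, hr.2⟩))
  rw [hw.apNorm_eq hp (by fun_prop), radialMoment, ← intervalIntegral.integral_const_mul,
    intervalIntegral.integral_of_le zero_le_one, integral_Ioc_eq_integral_Ioo,
    integral_eq_lintegral_of_nonneg_ae (ae_restrict_of_forall_mem measurableSet_Ioo hnonneg)
      hint.aestronglyMeasurable,
    setLIntegral_radialMeasure measurableSet_Ioo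
      (hw.2.1.mono_set Ioo_subset_Ico_self).aemeasurable]
  congr 1
  refine setLIntegral_congr_fun measurableSet_Ioo fun r hr => ?_
  rw [hmean r hr, ← ENNReal.ofReal_mul' (rpow_nonneg hr.1.le _), rpow_add_one hr.1.ne']
  ring_nf

lemma lintegral_radialMeasure_le_mul {v : ℝ → ℝ} (hv : RadialWeight v) (hw : RadialWeight w)
    {A : ℝ → ℝ} (hA : MonotoneOn A (Ioo 0 1)) (hA0 : ∀ r ∈ Ioo 0 1, 0 ≤ A r) {c : ℝ} (hc : 0 ≤ c)
    (h : ∀ a ∈ Ico 0 1, ∫ s in a..1, s * v s ≤ c * ∫ s in a..1, s * w s) :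
    ∫⁻ r in Ioo 0 1, ENNReal.ofReal (A r) ∂radialMeasure v ≤
      ENNReal.ofReal c * ∫⁻ r in Ioo 0 1, ENNReal.ofReal (A r) ∂radialMeasure w := by
  have : NullSingletonClass (radialMeasure v) :=
    inferInstanceAs (NullSingletonClass (volume.withDensity _))
  refine setLIntegral_le_mul_of_monotoneOn hA hA0 ENNReal.ofReal_ne_top fun a ha => ?_
  rw [hv.radialMeasure_Ioo ha, hw.radialMeasure_Ioo ha, ← ENNReal.ofReal_mul hc]
  exact ENNReal.ofReal_le_ofReal (by linarith [h a ha])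

lemma toReal_le_mul_toReal {x y : ℝ≥0∞} {c d : ℝ} (hc : 0 ≤ c) (hxy : x ≤ ENNReal.ofReal c * y)
    (hyx : y ≤ ENNReal.ofReal d * x) : x.toReal ≤ c * y.toReal := by
  rcases eq_or_ne x ⊤ with rfl | hx
  · simp only [ENNReal.toReal_top]
    positivity
  · have hy : y ≠ ⊤ := ne_top_of_le_ne_top (ENNReal.mul_ne_top ENNReal.ofReal_ne_top hx) hyx
    simpa only [ENNReal.toReal_mul, ENNReal.toReal_ofReal hc] using
      ENNReal.toReal_mono (ENNReal.mul_ne_top ENNReal.ofReal_ne_top hy) hxy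

/-- `ApNorm` takes the junk value `0` outside the Bergman space; with tail domination in both
directions this happens for the same `f` on the two sides. -/
lemma apNorm_le_mul_apNorm {v : ℝ → ℝ} (hv : RadialWeight v) (hw : RadialWeight w) {c d : ℝ}
    (hc : 0 ≤ c) (hd : 0 ≤ d)
    (hvw : ∀ a ∈ Ico 0 1, ∫ s in a..1, s * v s ≤ c * ∫ s in a..1, s * w s)
    (hwv : ∀ a ∈ Ico 0 1, ∫ s in a..1, s * w s ≤ d * ∫ s in a..1, s * v s)
    (hp : 0 < p) (hf : DifferentiableOn ℂ f (ball 0 1)) : ApNorm p v f ≤ c * ApNorm p w f := by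
  have hmono : MonotoneOn (circleAverage (fun z => ‖f z‖ ^ p) 0) (Ioo 0 1) :=
    (continuousSubharmonicOn_norm_rpow isOpen_ball hf hp).monotoneOn_circleAverage.mono
      Ioo_subset_Ico_self
  have hnonneg : ∀ r ∈ Ioo (0 : ℝ) 1, 0 ≤ circleAverage (fun z => ‖f z‖ ^ p) 0 r := fun _ _ =>
    circleAverage_nonneg_of_nonneg fun _ _ => by positivity
  rw [hv.apNorm_eq hp hf, hw.apNorm_eq hp hf]
  exact toReal_le_mul_toReal hc (lintegral_radialMeasure_le_mul hv hw hmono hnonneg hc hvw)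
    (lintegral_radialMeasure_le_mul hw hv hmono hnonneg hd hwv)

end BergmanNorm

/-- For `0 < p < ∞` and a radial weight `ω` with `ω̃` a weight, the two-sided
comparison `C⁻¹‖f‖_{A^p_{ω̃}} ≤ ‖f‖_{A^p_ω} ≤ C‖f‖_{A^p_{ω̃}}` (some `C ≥ 1`, all analytic `f`)
holds if and only if `ω ∈ D = D̂ ∩ Ď` (norms stated via their `p`-th powers). -/
theorem statement6 (p : ℝ) (hp : 0 < p) (ω : ℝ → ℝ) (hω : RadialWeight ω)
    (hω' : MeasureTheory.IntegrableOn (assocW ω) (Set.Ico 0 1)) :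
    (∃ C : ℝ, 1 ≤ C ∧ ∀ f : ℂ → ℂ, DifferentiableOn ℂ f (Metric.ball (0:ℂ) 1) →
        C⁻¹ * ApNorm p (assocW ω) f ≤ ApNorm p ω f ∧
          ApNorm p ω f ≤ C * ApNorm p (assocW ω) f) ↔
      (Dhat ω ∧ Dcheck ω) := by
  have hω_assoc : RadialWeight (assocW ω) := hω.assoc hω'
  constructor
  · rintro ⟨C, hC, hcomp⟩
    have hC0 : 0 < C := zero_lt_one.trans_le hC
    have hpow (n : ℕ) := hcomp (fun z => z ^ n) (by fun_prop)
    simp_rw [hω.apNorm_pow hp, hω_assoc.apNorm_pow hp, inv_mul_le_iff₀ hC0, mul_left_comm C,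
      mul_le_mul_iff_right₀ zero_lt_two] at hpow
    exact dhat_and_dcheck_of_radialMoment_le hω hω' hp hC0.le (fun n => (hpow n).2)
      fun n => (hpow n).1
  · rintro ⟨hhat, hcheck⟩
    obtain ⟨c, hc, htails⟩ := exists_integral_id_mul_le_mul_of_dhat_of_dcheck hω hω' hhat hcheck
    have hc0 : 0 < c := zero_lt_one.trans_le hc
    have hle := fun a ha => (htails a ha).1
    have hge := fun a ha => (htails a ha).2
    refine ⟨c, hc, fun f hf => ⟨?_, apNorm_le_mul_apNorm hω hω_assoc hc0.le hc0.le hle hge hp hf⟩⟩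
    rw [inv_mul_le_iff₀ hc0]
    exact apNorm_le_mul_apNorm hω_assoc hω hc0.le hc0.le hge hle hp hf
end

section
/- Let ω be a radial weight. Then ω ∈ D = D̂ ∩ Ď if and only if ω̃ is a weight and ω̃ ∈ D = D̂ ∩ Ď. -/
/-!
With `x = 1 - r` the dilations `r ↦ 1 - (1 - r) / K` become `x ↦ x / K`, the tail of `ω` becomes a
nondecreasing function `V` on `(0, 1]`, and the tail of `ω̃` becomes `L x = ∫_0^x V(y) dy/y`. As
`dy/y` is dilation invariant, `L (x / K) = ∫_0^x V(y / K) dy/y`.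

From `V` to `L`: iterating the `Ď` inequality gives `V x ≤ M x ^ α` with `α > 0`, so `L` is finite,
and integrating the inequalities for `V` against `dy/y` gives those for `L`, with the same
constants.

From `L` to `V`: monotonicity gives `V (x / K) log K ≤ L x - L (x / K) ≤ V x log K`. The upper bound
and the `Ď` inequality for `L` give `L ≤ B V`, and the lower bound gives `V (x / 2) ≤ A L x`. So `V`
and `L` are comparable up to a dilation, which both conditions tolerate, the `Ď` inequality after
being iterated often enough to absorb `A B`.
-/

open MeasureTheory Set

section DoublingAtZero

variable {V L : ℝ → ℝ}

/-- Doubling on `(0, 1]`: the condition `D̂` in the variable `x = 1 - r`, for a function `V` that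
need not be a tail. -/
def DoublingAtZero (V : ℝ → ℝ) : Prop :=
  ∃ C : ℝ, 1 ≤ C ∧ ∀ x ∈ Ioc (0 : ℝ) 1, V x ≤ C * V (x / 2)

/-- Reverse doubling on `(0, 1]`: the condition `Ď` in the variable `x = 1 - r`, for a function `V`
that need not be a tail. -/
def ReverseDoublingAtZero (V : ℝ → ℝ) : Prop :=
  ∃ K C : ℝ, 1 < K ∧ 1 < C ∧ ∀ x ∈ Ioc (0 : ℝ) 1, C * V (x / K) ≤ V x

lemma div_mem_Ioc_zero_one {x K : ℝ} (hx : x ∈ Ioc (0 : ℝ) 1) (hK : 1 ≤ K) :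
    x / K ∈ Ioc (0 : ℝ) 1 :=
  ⟨div_pos hx.1 (by linarith), (div_le_self hx.1.le hK).trans hx.2⟩

lemma pow_mul_div_pow_le {K C : ℝ} (hK : 1 ≤ K) (hC : 0 ≤ C)
    (h : ∀ x ∈ Ioc (0 : ℝ) 1, C * V (x / K) ≤ V x) (n : ℕ) :
    ∀ x ∈ Ioc (0 : ℝ) 1, C ^ n * V (x / K ^ n) ≤ V x := by
  induction n with
  | zero => simp
  | succ n ih =>
    intro x hx
    calc C ^ (n + 1) * V (x / K ^ (n + 1)) = C * (C ^ n * V (x / K / K ^ n)) := by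
          rw [div_div, ← pow_succ', pow_succ', mul_assoc]
      _ ≤ C * V (x / K) := by gcongr; exact ih _ (div_mem_Ioc_zero_one hx hK)
      _ ≤ V x := h x hx

lemma ReverseDoublingAtZero.exists_le_rpow (h : ReverseDoublingAtZero V)
    (hV : MonotoneOn V (Ioc 0 1)) (hV1 : 0 ≤ V 1) :
    ∃ α M : ℝ, 0 < α ∧ ∀ x ∈ Ioc (0 : ℝ) 1, V x ≤ M * x ^ α := by
  obtain ⟨K, C, hK, hC, h⟩ := h
  have hK0 : 0 < K := by linarith
  have hC0 : 0 < C := by linarith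
  have hKα : K ^ Real.logb K C = C := Real.rpow_logb hK0 hK.ne' hC0
  refine ⟨Real.logb K C, C * V 1, Real.logb_pos hK hC, fun x hx => ?_⟩
  obtain ⟨n, hn, hn'⟩ :=
    exists_nat_pow_near_of_lt_one hx.1 hx.2 (inv_pos.2 hK0) (inv_lt_one_of_one_lt₀ hK)
  have hpow : (C ^ (n + 1))⁻¹ ≤ x ^ Real.logb K C := by
    calc (C ^ (n + 1))⁻¹ = (K⁻¹ ^ (n + 1)) ^ Real.logb K C := by
          rw [← Real.rpow_pow_comm (by positivity), Real.inv_rpow hK0.le, hKα, inv_pow]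
      _ ≤ x ^ Real.logb K C := by
          have := Real.logb_pos hK hC
          gcongr
  calc V x ≤ V (1 / K ^ n) := by
        rw [one_div, ← inv_pow]
        refine hV hx ⟨by positivity, ?_⟩ hn'
        exact pow_le_one₀ (by positivity) (inv_le_one_of_one_le₀ hK.le)
    _ ≤ V 1 / C ^ n := by
        rw [le_div_iff₀' (by positivity)]
        exact pow_mul_div_pow_le hK.le hC0.le h n 1 (by simp)
    _ = C * V 1 * (C ^ (n + 1))⁻¹ := by rw [pow_succ]; field_simp
    _ ≤ C * V 1 * x ^ Real.logb K C := by gcongr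

lemma doublingAtZero_of_forall_mem_Ioc {δ C : ℝ} (hV : MonotoneOn V (Ioc 0 1))
    (hpos : ∀ x ∈ Ioc (0 : ℝ) 1, 0 < V x) (hδ : δ ∈ Ioc (0 : ℝ) 1)
    (h : ∀ x ∈ Ioc 0 δ, V x ≤ C * V (x / 2)) : DoublingAtZero V := by
  refine ⟨max 1 (max C (V 1 / V (δ / 2))), le_max_left _ _, fun x hx => ?_⟩
  have hδ2 : δ / 2 ∈ Ioc (0 : ℝ) 1 := div_mem_Ioc_zero_one hδ one_le_two
  have hx2 : x / 2 ∈ Ioc (0 : ℝ) 1 := div_mem_Ioc_zero_one hx one_le_two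
  have hVx2 := hpos _ hx2
  rcases le_or_gt x δ with hxδ | hδx
  · calc V x ≤ C * V (x / 2) := h x ⟨hx.1, hxδ⟩
      _ ≤ _ := by gcongr; exact (le_max_left _ _).trans (le_max_right _ _)
  · have hVδ2 := hpos _ hδ2
    have hV1 : 0 ≤ V 1 := (hpos 1 (by simp)).le
    calc V x ≤ V 1 := hV hx (by simp) hx.2
      _ = V 1 / V (δ / 2) * V (δ / 2) := (div_mul_cancel₀ _ hVδ2.ne').symm
      _ ≤ V 1 / V (δ / 2) * V (x / 2) := by gcongr; exact hV hδ2 hx2 (by linarith)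
      _ ≤ _ := by gcongr; exact (le_max_right _ _).trans (le_max_right _ _)

lemma DoublingAtZero.of_comparable {A B : ℝ} (hL : DoublingAtZero L)
    (hV : MonotoneOn V (Ioc 0 1)) (hpos : ∀ x ∈ Ioc (0 : ℝ) 1, 0 < V x) (hA : 0 ≤ A)
    (hVL : ∀ x ∈ Ioc (0 : ℝ) 1, V (x / 2) ≤ A * L x)
    (hLV : ∀ x ∈ Ioc (0 : ℝ) 1, L x ≤ B * V x) : DoublingAtZero V := by
  obtain ⟨C, hC, h⟩ := hL
  refine doublingAtZero_of_forall_mem_Ioc (δ := 1 / 2) (C := A * C * C * B) hV hpos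
    (by norm_num) fun x hx => ?_
  have h2x : 2 * x ∈ Ioc (0 : ℝ) 1 := ⟨by linarith [hx.1], by linarith [hx.2]⟩
  have hx1 : x ∈ Ioc (0 : ℝ) 1 := ⟨hx.1, by linarith [hx.2]⟩
  calc V x = V (2 * x / 2) := by rw [mul_div_cancel_left₀ x two_ne_zero]
    _ ≤ A * L (2 * x) := hVL _ h2x
    _ ≤ A * (C * L (2 * x / 2)) := by gcongr; exact h _ h2x
    _ = A * (C * L x) := by rw [mul_div_cancel_left₀ x two_ne_zero]
    _ ≤ A * (C * (C * L (x / 2))) := by gcongr; exact h x hx1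
    _ ≤ A * (C * (C * (B * V (x / 2)))) := by
        gcongr
        exact hLV _ (div_mem_Ioc_zero_one hx1 one_le_two)
    _ = A * C * C * B * V (x / 2) := by ring

lemma ReverseDoublingAtZero.of_comparable {A B J : ℝ} (hL : ReverseDoublingAtZero L)
    (hL0 : ∀ x ∈ Ioc (0 : ℝ) 1, 0 ≤ L x) (hJ : 1 ≤ J) (hB : 0 < B)
    (hVL : ∀ x ∈ Ioc (0 : ℝ) 1, V (x / J) ≤ A * L x)
    (hLV : ∀ x ∈ Ioc (0 : ℝ) 1, L x ≤ B * V x) : ReverseDoublingAtZero V := by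
  obtain ⟨K, C, hK, hC, h⟩ := hL
  obtain ⟨n, hn⟩ := pow_unbounded_of_one_lt (2 * A * B) hC
  -- The exponent is `n + 1` because `K ^ n * J` could be `1`.
  have hCn : 2 * A * B ≤ C ^ (n + 1) := hn.le.trans (pow_le_pow_right₀ hC.le n.le_succ)
  have hKn : 1 < K ^ (n + 1) := one_lt_pow₀ hK n.succ_ne_zero
  refine ⟨K ^ (n + 1) * J, 2, one_lt_mul_of_lt_of_le hKn hJ, one_lt_two, fun x hx => ?_⟩
  have hy := div_mem_Ioc_zero_one hx hKn.le
  set y := x / K ^ (n + 1)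
  have hAL : 2 * (A * L y) ≤ V x := by
    refine le_of_mul_le_mul_left ?_ hB
    calc B * (2 * (A * L y)) = 2 * A * B * L y := by ring
      _ ≤ C ^ (n + 1) * L y := by gcongr; exact hL0 y hy
      _ ≤ L x := pow_mul_div_pow_le hK.le (by linarith) h (n + 1) x hx
      _ ≤ B * V x := hLV x hx
  calc 2 * V (x / (K ^ (n + 1) * J)) = 2 * V (y / J) := by rw [div_div]
    _ ≤ 2 * (A * L y) := by gcongr; exact hVL y hy
    _ ≤ V x := hAL

end DoublingAtZero

section LogPrimitive

variable {V : ℝ → ℝ} {K x : ℝ}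

/-- The primitive `∫_0^x V(y) dy/y` of `V` with respect to the dilation-invariant measure `dy/y`.
For `V x = ω̂(1 - x)` it is the tail of `ω̃` at `1 - x`. -/
noncomputable def logPrimitive (V : ℝ → ℝ) (x : ℝ) : ℝ := ∫ y in 0..x, V y / y

lemma logPrimitive_div (V : ℝ → ℝ) (hK : K ≠ 0) (x : ℝ) :
    logPrimitive V (x / K) = ∫ y in 0..x, V (y / K) / y := by
  have h := intervalIntegral.inv_smul_integral_comp_div (a := 0) (b := x) (fun y => V y / y) K
  rw [zero_div, ← intervalIntegral.integral_smul] at h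
  rw [logPrimitive, ← h]
  congr with y
  rw [smul_eq_mul, div_div_eq_mul_div, inv_mul_eq_div, mul_div_right_comm,
    mul_div_cancel_right₀ _ hK]

lemma intervalIntegrable_comp_div_div (hK : K ≠ 0)
    (h : IntervalIntegrable (fun y => V y / y) volume 0 (x / K)) :
    IntervalIntegrable (fun y => V (y / K) / y) volume 0 x := by
  have h := (h.comp_mul_left (c := K⁻¹)).const_mul K⁻¹
  simp only [div_inv_eq_mul, zero_mul, div_mul_cancel₀ _ hK] at h
  convert h using 2 with y
  field_simp

lemma intervalIntegrable_of_mem_Icc {f : ℝ → ℝ} {a b c d : ℝ}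
    (hf : IntervalIntegrable f volume a b) (hc : c ∈ Icc a b) (hd : d ∈ Icc a b) :
    IntervalIntegrable f volume c d :=
  hf.mono_set (uIcc_subset_uIcc (Icc_subset_uIcc hc) (Icc_subset_uIcc hd))

protected lemma DoublingAtZero.logPrimitive (hV : DoublingAtZero V)
    (hI : IntervalIntegrable (fun y => V y / y) volume 0 1) :
    DoublingAtZero (logPrimitive V) := by
  obtain ⟨C, hC, h⟩ := hV
  refine ⟨C, hC, fun x hx => ?_⟩
  have hx2 := div_mem_Ioc_zero_one hx one_le_two
  rw [logPrimitive_div V two_ne_zero, ← intervalIntegral.integral_const_mul]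
  refine intervalIntegral.integral_mono_on_of_le_Ioo hx.1.le
    (intervalIntegrable_of_mem_Icc hI (by simp) (Ioc_subset_Icc_self hx))
    ((intervalIntegrable_comp_div_div two_ne_zero
      (intervalIntegrable_of_mem_Icc hI (by simp) (Ioc_subset_Icc_self hx2))).const_mul C)
    fun y hy => ?_
  rw [← mul_div_assoc]
  exact div_le_div_of_nonneg_right (h y ⟨hy.1, hy.2.le.trans hx.2⟩) hy.1.le

protected lemma ReverseDoublingAtZero.logPrimitive (hV : ReverseDoublingAtZero V)
    (hI : IntervalIntegrable (fun y => V y / y) volume 0 1) :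
    ReverseDoublingAtZero (logPrimitive V) := by
  obtain ⟨K, C, hK, hC, h⟩ := hV
  refine ⟨K, C, hK, hC, fun x hx => ?_⟩
  have hK0 : K ≠ 0 := by linarith
  have hxK := div_mem_Ioc_zero_one hx hK.le
  rw [logPrimitive_div V hK0, ← intervalIntegral.integral_const_mul]
  refine intervalIntegral.integral_mono_on_of_le_Ioo hx.1.le
    ((intervalIntegrable_comp_div_div hK0
      (intervalIntegrable_of_mem_Icc hI (by simp) (Ioc_subset_Icc_self hxK))).const_mul C)
    (intervalIntegrable_of_mem_Icc hI (by simp) (Ioc_subset_Icc_self hx)) fun y hy => ?_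
  rw [← mul_div_assoc]
  exact div_le_div_of_nonneg_right (h y ⟨hy.1, hy.2.le.trans hx.2⟩) hy.1.le

lemma ReverseDoublingAtZero.intervalIntegrable_div (h : ReverseDoublingAtZero V)
    (hV : MonotoneOn V (Ioc 0 1)) (hV0 : ∀ x ∈ Ioc (0 : ℝ) 1, 0 ≤ V x) :
    IntervalIntegrable (fun y => V y / y) volume 0 1 := by
  obtain ⟨α, M, hα, hM⟩ := h.exists_le_rpow hV (hV0 1 (by simp))
  have hpow : IntervalIntegrable (fun y : ℝ => M * y ^ (α - 1)) volume 0 1 :=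
    (intervalIntegral.intervalIntegrable_rpow' (by linarith)).const_mul M
  refine hpow.mono_fun' ?_ ?_ <;> rw [uIoc_of_le zero_le_one]
  · exact ((aemeasurable_restrict_of_monotoneOn measurableSet_Ioc hV).div
      aemeasurable_id).aestronglyMeasurable
  · filter_upwards [ae_restrict_mem measurableSet_Ioc] with y hy
    rw [Real.norm_of_nonneg (div_nonneg (hV0 y hy) hy.1.le), Real.rpow_sub_one hy.1.ne',
      ← mul_div_assoc]
    exact div_le_div_of_nonneg_right (hM y hy) hy.1.le

lemma logPrimitive_nonneg (hV0 : ∀ y ∈ Ioc (0 : ℝ) 1, 0 ≤ V y) (hx : x ∈ Icc (0 : ℝ) 1) :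
    0 ≤ logPrimitive V x := by
  rw [logPrimitive, intervalIntegral.integral_of_le hx.1]
  exact setIntegral_nonneg measurableSet_Ioc fun y hy =>
    div_nonneg (hV0 y ⟨hy.1, hy.2.trans hx.2⟩) hy.1.le

lemma logPrimitive_sub_logPrimitive (hI : IntervalIntegrable (fun y => V y / y) volume 0 1)
    {a b : ℝ} (ha : a ∈ Icc (0 : ℝ) 1) (hb : b ∈ Icc (0 : ℝ) 1) :
    logPrimitive V b - logPrimitive V a = ∫ y in a..b, V y / y :=
  intervalIntegral.integral_interval_sub_left (intervalIntegrable_of_mem_Icc hI (by simp) hb)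
    (intervalIntegrable_of_mem_Icc hI (by simp) ha)

lemma intervalIntegrable_const_div (c : ℝ) {a b : ℝ} (ha : 0 < a) (hb : 0 < b) :
    IntervalIntegrable (fun y => c / y) volume a b :=
  (ContinuousOn.div continuousOn_const continuousOn_id fun _ hy =>
    ((lt_min ha hb).trans_le hy.1).ne').intervalIntegrable

lemma integral_const_div_of_pos (c : ℝ) {a b : ℝ} (ha : 0 < a) (hb : 0 < b) :
    ∫ y in a..b, c / y = c * Real.log (b / a) := by
  simp only [div_eq_mul_inv c, intervalIntegral.integral_const_mul, integral_inv_of_pos ha hb]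

lemma mul_log_le_logPrimitive_sub (hV : MonotoneOn V (Ioc 0 1))
    (hI : IntervalIntegrable (fun y => V y / y) volume 0 1) {a b : ℝ}
    (ha : 0 < a) (hab : a ≤ b) (hb : b ≤ 1) :
    V a * Real.log (b / a) ≤ logPrimitive V b - logPrimitive V a := by
  have haI : a ∈ Icc (0 : ℝ) 1 := ⟨ha.le, hab.trans hb⟩
  have hbI : b ∈ Icc (0 : ℝ) 1 := ⟨ha.le.trans hab, hb⟩
  rw [logPrimitive_sub_logPrimitive hI haI hbI,
    ← integral_const_div_of_pos _ ha (ha.trans_le hab)]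
  refine intervalIntegral.integral_mono_on hab
    (intervalIntegrable_const_div _ ha (ha.trans_le hab))
    (intervalIntegrable_of_mem_Icc hI haI hbI) fun y hy => ?_
  have hy0 : 0 < y := ha.trans_le hy.1
  exact div_le_div_of_nonneg_right
    (hV ⟨ha, hab.trans hb⟩ ⟨hy0, hy.2.trans hb⟩ hy.1) hy0.le

lemma logPrimitive_sub_le_mul_log (hV : MonotoneOn V (Ioc 0 1))
    (hI : IntervalIntegrable (fun y => V y / y) volume 0 1) {a b : ℝ}
    (ha : 0 < a) (hab : a ≤ b) (hb : b ≤ 1) :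
    logPrimitive V b - logPrimitive V a ≤ V b * Real.log (b / a) := by
  have haI : a ∈ Icc (0 : ℝ) 1 := ⟨ha.le, hab.trans hb⟩
  have hbI : b ∈ Icc (0 : ℝ) 1 := ⟨ha.le.trans hab, hb⟩
  rw [logPrimitive_sub_logPrimitive hI haI hbI,
    ← integral_const_div_of_pos _ ha (ha.trans_le hab)]
  refine intervalIntegral.integral_mono_on hab (intervalIntegrable_of_mem_Icc hI haI hbI)
    (intervalIntegrable_const_div _ ha (ha.trans_le hab)) fun y hy => ?_
  have hy0 : 0 < y := ha.trans_le hy.1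
  exact div_le_div_of_nonneg_right
    (hV ⟨hy0, hy.2.trans hb⟩ ⟨ha.trans_le hab, hb⟩ hy.2) hy0.le

lemma comp_div_le_mul_logPrimitive (hV : MonotoneOn V (Ioc 0 1))
    (hV0 : ∀ y ∈ Ioc (0 : ℝ) 1, 0 ≤ V y)
    (hI : IntervalIntegrable (fun y => V y / y) volume 0 1) (hK : 1 < K)
    (hx : x ∈ Ioc (0 : ℝ) 1) : V (x / K) ≤ (Real.log K)⁻¹ * logPrimitive V x := by
  have hxK := div_mem_Ioc_zero_one hx hK.le
  have hsub := mul_log_le_logPrimitive_sub hV hI hxK.1 (div_le_self hx.1.le hK.le) hx.2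
  have hL := logPrimitive_nonneg hV0 (Ioc_subset_Icc_self hxK)
  rw [div_div_cancel₀ hx.1.ne'] at hsub
  rw [inv_mul_eq_div, le_div_iff₀ (Real.log_pos hK)]
  linarith

lemma exists_logPrimitive_le_mul (hV : MonotoneOn V (Ioc 0 1))
    (hI : IntervalIntegrable (fun y => V y / y) volume 0 1)
    (h : ReverseDoublingAtZero (logPrimitive V)) :
    ∃ B : ℝ, 0 < B ∧ ∀ x ∈ Ioc (0 : ℝ) 1, logPrimitive V x ≤ B * V x := by
  obtain ⟨K, C, hK, hC, h⟩ := h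
  have hlog := Real.log_pos hK
  have hC1 : 0 < C - 1 := by linarith
  refine ⟨C * Real.log K / (C - 1), by positivity, fun x hx => ?_⟩
  have hsub := logPrimitive_sub_le_mul_log hV hI (div_mem_Ioc_zero_one hx hK.le).1
    (div_le_self hx.1.le hK.le) hx.2
  rw [div_div_cancel₀ hx.1.ne'] at hsub
  rw [div_mul_eq_mul_div, le_div_iff₀ hC1]
  calc logPrimitive V x * (C - 1)
      ≤ C * logPrimitive V x - C * logPrimitive V (x / K) := by linarith [h x hx]
    _ = C * (logPrimitive V x - logPrimitive V (x / K)) := by ring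
    _ ≤ C * (V x * Real.log K) := by gcongr
    _ = C * Real.log K * V x := by ring

end LogPrimitive

theorem statement7_general {V : ℝ → ℝ} (hV : MonotoneOn V (Ioc 0 1))
    (hpos : ∀ x ∈ Ioc (0 : ℝ) 1, 0 < V x) :
    (DoublingAtZero V ∧ ReverseDoublingAtZero V) ↔
      (IntervalIntegrable (fun y => V y / y) volume 0 1 ∧
        DoublingAtZero (logPrimitive V) ∧ ReverseDoublingAtZero (logPrimitive V)) := by
  have hV0 : ∀ x ∈ Ioc (0 : ℝ) 1, 0 ≤ V x := fun x hx => (hpos x hx).le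
  constructor
  · rintro ⟨hD, hR⟩
    have hI := hR.intervalIntegrable_div hV hV0
    exact ⟨hI, hD.logPrimitive hI, hR.logPrimitive hI⟩
  · rintro ⟨hI, hD, hR⟩
    obtain ⟨B, hB, hLV⟩ := exists_logPrimitive_le_mul hV hI hR
    have hVL : ∀ x ∈ Ioc (0 : ℝ) 1, V (x / 2) ≤ (Real.log 2)⁻¹ * logPrimitive V x :=
      fun x hx => comp_div_le_mul_logPrimitive hV hV0 hI one_lt_two hx
    exact ⟨hD.of_comparable hV hpos (by positivity) hVL hLV,
      hR.of_comparable (fun x hx => logPrimitive_nonneg hV0 (Ioc_subset_Icc_self hx))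
        one_le_two hB hVL hLV⟩

section RadialWeight

variable {ω : ℝ → ℝ}

lemma forall_mem_Ico_iff_forall_one_sub_mem_Ioc {p : ℝ → Prop} :
    (∀ r ∈ Ico (0 : ℝ) 1, p r) ↔ ∀ x ∈ Ioc (0 : ℝ) 1, p (1 - x) := by
  refine ⟨fun h x hx => h _ ⟨sub_nonneg.2 hx.2, sub_lt_self 1 hx.1⟩, fun h r hr => ?_⟩
  simpa only [sub_sub_cancel] using h (1 - r) ⟨sub_pos.2 hr.2, sub_le_self 1 hr.1⟩

lemma dhat_iff_doublingAtZero : Dhat ω ↔ DoublingAtZero fun x => tailInt ω (1 - x) := by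
  have midpoint_eq (x : ℝ) : (1 + (1 - x)) / 2 = 1 - x / 2 := by ring
  simp only [Dhat, DoublingAtZero, forall_mem_Ico_iff_forall_one_sub_mem_Ioc, midpoint_eq]

lemma dcheck_iff_reverseDoublingAtZero :
    Dcheck ω ↔ ReverseDoublingAtZero fun x => tailInt ω (1 - x) := by
  simp only [Dcheck, ReverseDoublingAtZero, forall_mem_Ico_iff_forall_one_sub_mem_Ioc,
    sub_sub_cancel]

lemma assocW_one_sub (ω : ℝ → ℝ) (x : ℝ) : assocW ω (1 - x) = tailInt ω (1 - x) / x := by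
  rw [assocW, sub_sub_cancel]

lemma tailInt_assocW_one_sub (ω : ℝ → ℝ) (x : ℝ) :
    tailInt (assocW ω) (1 - x) = logPrimitive (fun y => tailInt ω (1 - y)) x := by
  have h := intervalIntegral.integral_comp_sub_left (a := 0) (b := x) (assocW ω) 1
  simp only [assocW_one_sub, sub_zero] at h
  exact h.symm

lemma integrableOn_assocW_iff :
    IntegrableOn (assocW ω) (Ico 0 1) ↔
      IntervalIntegrable (fun y => tailInt ω (1 - y) / y) volume 0 1 := by
  rw [← intervalIntegrable_iff_integrableOn_Ico_of_le zero_le_one,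
    ← IntervalIntegrable.comp_sub_left_iff 1, IntervalIntegrable.symm_iff]
  simp only [assocW_one_sub, sub_self, sub_zero]

lemma RadialWeight.antitoneOn_tailInt_s7 (hω : RadialWeight ω) :
    AntitoneOn (tailInt ω) (Ico 0 1) := by
  intro a ha b hb hab
  refine intervalIntegral.integral_mono_interval hab hb.2.le le_rfl ?_ ?_
  · rw [← restrict_Ioo_eq_restrict_Ioc]
    filter_upwards [ae_restrict_mem measurableSet_Ioo] with s hs
    exact hω.1 s ⟨ha.1.trans hs.1.le, hs.2⟩
  · rw [intervalIntegrable_iff_integrableOn_Ico_of_le ha.2.le]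
    exact hω.2.1.mono_set (Ico_subset_Ico_left ha.1)

lemma RadialWeight.monotoneOn_tailInt_one_sub (hω : RadialWeight ω) :
    MonotoneOn (fun x => tailInt ω (1 - x)) (Ioc 0 1) := fun _ hx _ hy hxy =>
  hω.antitoneOn_tailInt_s7 ⟨sub_nonneg.2 hy.2, sub_lt_self 1 hy.1⟩
    ⟨sub_nonneg.2 hx.2, sub_lt_self 1 hx.1⟩ (sub_le_sub_left hxy 1)

end RadialWeight

/-- A radial weight `ω` belongs to `D = D̂ ∩ Ď` if and only if `ω̃` is a weight
and `ω̃ ∈ D = D̂ ∩ Ď`. -/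
theorem statement7 (ω : ℝ → ℝ) (hω : RadialWeight ω) :
    (Dhat ω ∧ Dcheck ω) ↔
      (MeasureTheory.IntegrableOn (assocW ω) (Set.Ico 0 1) ∧
        Dhat (assocW ω) ∧ Dcheck (assocW ω)) := by
  simp only [dhat_iff_doublingAtZero, dcheck_iff_reverseDoublingAtZero, integrableOn_assocW_iff,
    tailInt_assocW_one_sub]
  exact statement7_general hω.monotoneOn_tailInt_one_sub
    (forall_mem_Ico_iff_forall_one_sub_mem_Ioc.1 hω.2.2)
end
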